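/- arXiv:1504.06832 — 4 statements merged into one kernel-verified Lean document; each statement's English description precedes it below -/
import Mathlib

section
/- Fix an integer k ≥ 1. For every ε > 0 there exists C > 0 such that for every N > k and every X ∈ 𝔾_N, Σ over Y ∈ 𝔾_{N−1} satisfying |y_{(k)}| ≤ q^C |x_{(k)}| of Λ^N_{N−1}(X,Y) is at most ε; that is, as C gets large, the Λ^N_{N−1}(X,·)-probability of the event log_q|y_{(k)}| − log_q|x_{(k)}| ≥ C tends to 0 uniformly in N > k and X ∈ 𝔾_N. -/
open scoped BigOperators
open Classical

noncomputable section

/-- The double q-lattice Λ = {ζ₋ qᵐ} ∪ {ζ₊ qⁿ}. -/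
def Lambda (q zm zp : ℝ) : Set ℝ :=
  {x | ∃ m : ℤ, x = zm * q ^ m} ∪ {x | ∃ n : ℤ, x = zp * q ^ n}

/-- The interval I(a,b) of the double q-lattice. -/
def qInterval (q zm zp a b : ℝ) : Set ℝ :=
  if b < 0 then Set.Ico a b ∩ Lambda q zm zp
  else if a < 0 then Set.Icc a b ∩ Lambda q zm zp
  else Set.Ioc a b ∩ Lambda q zm zp

/-- N-point configurations on the lattice. -/
def Conf (q zm zp : ℝ) (N : ℕ) : Type :=
  {x : Fin N → ℝ // StrictMono x ∧ ∀ i, x i ∈ Lambda q zm zp}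

/-- Interlacement Y ≺ X. -/
def Interlaces (q zm zp : ℝ) {N : ℕ} (Y : Conf q zm zp N) (X : Conf q zm zp (N+1)) : Prop :=
  ∀ i : Fin N, Y.1 i ∈ qInterval q zm zp (X.1 i.castSucc) (X.1 i.succ)

/-- Vandermonde-type product ∏_{i<j} (x_j - x_i). -/
def vprod {N : ℕ} (x : Fin N → ℝ) : ℝ :=
  ∏ p ∈ Finset.univ.filter (fun p : Fin N × Fin N => p.1 < p.2), (x p.2 - x p.1)

/-- finite q-Pochhammer symbol (a;q)_n, real version. -/
def qpochR (a q : ℝ) (n : ℕ) : ℝ := ∏ m ∈ Finset.range n, (1 - a * q ^ m)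

/-- The q-link Λ^{N+1}_N. -/
def qlink (q zm zp : ℝ) (N : ℕ) (X : Conf q zm zp (N+1)) (Y : Conf q zm zp N) : ℝ :=
  if Interlaces q zm zp Y X then
    (∏ i, |Y.1 i|) * qpochR q q N * vprod Y.1 / vprod X.1
  else 0


/-- comparison in the variational order: |a| < |b|, or |a| = |b| and a ≤ b. -/
def varLE (a b : ℝ) : Prop := |a| < |b| ∨ (|a| = |b| ∧ a ≤ b)

/-- v : Fin N → ℝ is the variational series of the configuration X. -/
def IsVarSeries (q zm zp : ℝ) {N : ℕ} (X : Conf q zm zp N) (v : Fin N → ℝ) : Prop :=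
  (∃ σ : Equiv.Perm (Fin N), v = X.1 ∘ σ) ∧ ∀ i j : Fin N, i < j → varLE (v j) (v i)

/-!
The link is a multiple of `det (f i l (y i))`, where `f i l` is `|z| * z ^ l` cut off to the `i`-th
interval of `x`. By multilinearity its sum over all tuples is the determinant of the sums of the
`f i l`, which are `(x (i + 1) ^ (l + 1) - x i ^ (l + 1)) / (1 - q ^ (l + 1))`; this reduces to a
Vandermonde determinant, and the total mass is one.

Let `t` be an endpoint of the `j`-th interval that belongs to it. Moving `y j` from a point with
`|y j| ≤ |t|` to `t` multiplies each `|y i - y j|` by at least `(1 - q) / 2`, and does not decrease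
it unless `y i` lies beyond `t`. If at most `n` coordinates have absolute value at least `|t|`, the
weight therefore grows by a factor of order at least `|t| / |y j|`. Summing over `y j` bounds the
probability of `|y j| ≤ η |t|` by a constant times `η`, where the constant depends only on `q`
and `n`.

Finally let `r = |x_(k)|`. Between `k` and `2 (k + 1)` intervals contain an endpoint `t` with
`|t| ≥ r`, so `|y_(k)| ≤ η r` forces `|y j| ≤ η r` for one of them, and a union bound applies.
-/

section TailBound

open Finset Filter Topology

section General

variable {ι : Type*}

lemma prod_le_pow_card_mul_prod [DecidableEq ι] {s B : Finset ι} {f g : ι → ℝ} {D : ℝ}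
    (hD : 1 ≤ D) (hf : ∀ i ∈ s, 0 ≤ f i) (hg : ∀ i ∈ s, 0 ≤ g i)
    (h : ∀ i ∈ s, f i ≤ (if i ∈ B then D else 1) * g i) :
    ∏ i ∈ s, f i ≤ D ^ #B * ∏ i ∈ s, g i := by
  calc ∏ i ∈ s, f i
      ≤ ∏ i ∈ s, (if i ∈ B then D else 1) * g i := prod_le_prod hf h
    _ = D ^ #(s ∩ B) * ∏ i ∈ s, g i := by
        rw [prod_mul_distrib, prod_ite_mem, prod_const]
    _ ≤ D ^ #B * ∏ i ∈ s, g i :=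
        mul_le_mul_of_nonneg_right (pow_le_pow_right₀ hD (card_le_card inter_subset_right))
          (prod_nonneg hg)

lemma card_filter_abs_le_of_injective [Fintype ι] {v : ι → ℝ} (hv : Function.Injective v)
    (r : ℝ) : #{i | r ≤ |v i|} ≤ #{i | r < |v i|} + 2 := by
  have hsplit : univ.filter (fun i => r ≤ |v i|) ⊆
      univ.filter (fun i => r < |v i|) ∪ univ.filter (fun i => |v i| = r) := by
    intro i
    simpa only [mem_union, mem_filter_univ, eq_comm (b := r)] using le_iff_lt_or_eq.1
  have hlevel : #{i | |v i| = r} ≤ #({r, -r} : Finset ℝ) := by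
    refine card_le_card_of_injOn v (fun i hi => ?_) hv.injOn
    simpa using eq_or_eq_neg_of_abs_eq (mem_filter.1 hi).2
  calc #{i | r ≤ |v i|} ≤ #{i | r < |v i|} + #{i | |v i| = r} :=
        (card_le_card hsplit).trans (card_union_le _ _)
    _ ≤ #{i | r < |v i|} + 2 := by gcongr; exact hlevel.trans card_le_two

lemma sum_mul_update_le [DecidableEq ι] {α : Type*} [DecidableEq α] [DecidableEq (ι → α)]
    (S : Finset (ι → α)) (j : ι) (t : α) {f : α → ℝ} {g : (ι → α) → ℝ}
    (hf : ∀ z, 0 ≤ f z) (hg : ∀ y, 0 ≤ g y) :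
    ∑ y ∈ S, f (y j) * g (Function.update y j t) ≤
      (∑ z ∈ S.image (· j), f z) * ∑ u ∈ S.image (Function.update · j t), g u := by
  have hinj : Function.Injective fun y : ι → α => (y j, Function.update y j t) := fun y w h => by
    obtain ⟨hj, hu⟩ := Prod.mk.inj h
    rw [← Function.update_eq_self j y, ← Function.update_idem t, hu, hj, Function.update_idem,
      Function.update_eq_self]
  calc ∑ y ∈ S, f (y j) * g (Function.update y j t)
      = ∑ p ∈ S.image fun y => (y j, Function.update y j t), f p.1 * g p.2 :=
        (sum_image (f := fun p : α × (ι → α) => f p.1 * g p.2) hinj.injOn).symm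
    _ ≤ ∑ p ∈ S.image (· j) ×ˢ S.image (Function.update · j t), f p.1 * g p.2 :=
        sum_le_sum_of_subset_of_nonneg
          (image_subset_iff.2 fun y hy =>
            mem_product.2 ⟨mem_image_of_mem _ hy, mem_image_of_mem _ hy⟩)
          fun p _ _ => mul_nonneg (hf _) (hg _)
    _ = _ := by rw [sum_mul_sum, sum_product]

lemma sum_le_sum_sum_filter {α : Type*} {S : Finset α} {G : Finset ι} {p : ι → α → Prop}
    [∀ i, DecidablePred (p i)] {w : α → ℝ} (hw : ∀ y ∈ S, 0 ≤ w y)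
    (hp : ∀ y ∈ S, ∃ i ∈ G, p i y) :
    ∑ y ∈ S, w y ≤ ∑ i ∈ G, ∑ y ∈ S with p i y, w y := by
  simp_rw [sum_filter]
  rw [sum_comm]
  refine sum_le_sum fun y hy => ?_
  obtain ⟨i, hi, hiy⟩ := hp y hy
  calc w y = if p i y then w y else 0 := (if_pos hiy).symm
    _ ≤ ∑ i ∈ G, if p i y then w y else 0 :=
        single_le_sum (f := fun i => if p i y then w y else 0)
          (fun i _ => by split_ifs <;> simp [hw y hy]) hi

lemma tendsto_piFinset_atTop [Fintype ι] [DecidableEq ι] {κ : ι → Type*} :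
    Tendsto (fun A : ∀ i, Finset (κ i) => Fintype.piFinset A) (Filter.pi fun _ => atTop)
      atTop := by
  refine tendsto_atTop.2 fun S => ?_
  have hcover : ∀ᶠ A in Filter.pi fun i => (atTop : Filter (Finset (κ i))),
      ∀ i, S.image (· i) ≤ A i :=
    eventually_pi fun i => eventually_ge_atTop _
  filter_upwards [hcover] with A hA y hy
  exact Fintype.mem_piFinset.2 fun i => hA i (mem_image_of_mem _ hy)

lemma hasSum_multilinear_of_nonneg [Finite ι] {R : Type*} [Semiring R] [Module R ℝ]
    {κ : ι → Type*} {E : ι → Type*} [∀ i, AddCommMonoid (E i)] [∀ i, Module R (E i)]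
    [∀ i, TopologicalSpace (E i)] (f : ContinuousMultilinearMap R E ℝ)
    {g : ∀ i, κ i → E i} {a : ∀ i, E i} (hg : ∀ i, HasSum (g i) (a i))
    (hf : ∀ y : ∀ i, κ i, 0 ≤ f fun i => g i (y i)) :
    HasSum (fun y : ∀ i, κ i => f fun i => g i (y i)) (f a) := by
  have := Fintype.ofFinite ι
  have hbox : Tendsto (fun A : ∀ i, Finset (κ i) =>
      ∑ y ∈ Fintype.piFinset A, f fun i => g i (y i)) (Filter.pi fun _ => atTop) (𝓝 (f a)) := by
    simp_rw [← f.map_sum_finset]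
    exact (f.cont.tendsto a).comp
      (tendsto_pi_nhds.2 fun i => (hg i).comp (tendsto_eval_pi _ i))
  have hsum : Summable fun y : ∀ i, κ i => f fun i => g i (y i) := by
    refine summable_of_sum_le (c := f a) hf fun S => ge_of_tendsto hbox ?_
    filter_upwards [tendsto_piFinset_atTop.eventually_ge_atTop S] with A hA
    exact sum_le_sum_of_subset_of_nonneg hA fun y _ _ => hf y
  exact tendsto_nhds_unique hbox (hsum.hasSum.comp tendsto_piFinset_atTop) ▸ hsum.hasSum

end General

section Vandermonde

lemma det_sub_pow_succ {R : Type*} [CommRing R] {M : ℕ} (x : Fin (M + 1) → R) :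
    (Matrix.of fun i l : Fin M =>
      x i.succ ^ ((l : ℕ) + 1) - x i.castSucc ^ ((l : ℕ) + 1)).det =
      (Matrix.vandermonde x).det := by
  symm
  rw [Matrix.det_eq_of_forall_row_eq_smul_add_pred (B := Matrix.of fun i j : Fin (M + 1) =>
    Fin.cases (x 0 ^ (j : ℕ)) (fun i => x i.succ ^ (j : ℕ) - x i.castSucc ^ (j : ℕ)) i)
    (fun _ => 1) (fun j => by simp [Matrix.vandermonde])
    (fun i j => by simp [Matrix.vandermonde]), Matrix.det_succ_column_zero, Fin.sum_univ_succ]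
  simp [Matrix.submatrix]

variable {N : ℕ} {y : Fin N → ℝ}

lemma vprod_eq_det_vandermonde (y : Fin N → ℝ) : vprod y = (Matrix.vandermonde y).det := by
  rw [Matrix.det_vandermonde, vprod, prod_sigma']
  exact prod_bij' (fun p _ => ⟨p.1, p.2⟩) (fun p _ => (p.1, p.2)) (by simp) (by simp) (by simp)
    (by simp) (by simp)

lemma vprod_pos (hy : StrictMono y) : 0 < vprod y :=
  prod_pos fun _ hp => sub_pos.2 (hy (mem_filter.1 hp).2)

lemma abs_vprod_le_abs_vprod_update (j : Fin N) (t : ℝ) (B : Finset (Fin N)) {D : ℝ}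
    (hD : 1 ≤ D) (h : ∀ i ≠ j, |y i - y j| ≤ (if i ∈ B then D else 1) * |y i - t|) :
    |vprod y| ≤ D ^ #B * |vprod (Function.update y j t)| := by
  let pair (i : Fin N) : Fin N × Fin N := (min i j, max i j)
  have hpair : ∀ p ∈ ({p | p.1 < p.2} : Finset (Fin N × Fin N)), |y p.2 - y p.1| ≤
      (if p ∈ B.image pair then D else 1) *
        |Function.update y j t p.2 - Function.update y j t p.1| := by
    have hj (i : Fin N) (hi : i ≠ j) :
        |y i - y j| ≤ (if pair i ∈ B.image pair then D else 1) * |y i - t| := by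
      refine (h i hi).trans (mul_le_mul_of_nonneg_right ?_ (abs_nonneg _))
      by_cases hB : i ∈ B
      · rw [if_pos hB, if_pos (mem_image_of_mem pair hB)]
      · rw [if_neg hB]
        split_ifs <;> simp [hD]
    rintro ⟨a, b⟩ hab
    replace hab : a < b := by simpa using hab
    rcases eq_or_ne a j with rfl | ha
    · simpa [pair, hab.le, hab.ne'] using hj b hab.ne'
    rcases eq_or_ne b j with rfl | hb
    · simpa [pair, hab.le, ha, abs_sub_comm] using hj a ha
    rw [Function.update_of_ne ha, Function.update_of_ne hb]
    refine le_mul_of_one_le_left (abs_nonneg _) ?_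
    split_ifs <;> simp [hD]
  rw [vprod, vprod, abs_prod, abs_prod]
  refine (prod_le_pow_card_mul_prod hD (fun _ _ => abs_nonneg _) (fun _ _ => abs_nonneg _)
    hpair).trans ?_
  exact mul_le_mul_of_nonneg_right (pow_le_pow_right₀ hD card_image_le)
    (prod_nonneg fun _ _ => abs_nonneg _)

end Vandermonde

section Lattice

variable {q zm zp a b x y z : ℝ}

/-- The half-line `{x, x q, x q², …}` of a `q`-lattice from `x` towards `0`, the support of the
Jackson integral over `[0, x]`. -/
def qOrbit (q x : ℝ) : Set ℝ :=
  Set.range fun n : ℕ => x * q ^ n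

lemma mem_Lambda_of_mem_qInterval (h : y ∈ qInterval q zm zp a b) : y ∈ Lambda q zm zp := by
  unfold qInterval at h
  split_ifs at h <;> exact h.2

lemma mem_Icc_of_mem_qInterval (h : y ∈ qInterval q zm zp a b) : y ∈ Set.Icc a b := by
  unfold qInterval at h
  split_ifs at h
  exacts [Set.Ico_subset_Icc_self h.1, h.1, Set.Ioc_subset_Icc_self h.1]

lemma lt_of_mem_qInterval_of_le {c d s t : ℝ} (hs : s ∈ qInterval q zm zp a b)
    (ht : t ∈ qInterval q zm zp c d) (hbc : b ≤ c) : s < t := by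
  obtain ⟨-, hsb⟩ := mem_Icc_of_mem_qInterval hs
  obtain ⟨hct, htd⟩ := mem_Icc_of_mem_qInterval ht
  rcases lt_or_ge b 0 with hb | hb
  · rw [qInterval, if_pos hb] at hs
    exact hs.1.2.trans_le (hbc.trans hct)
  · have hc : 0 ≤ c := hb.trans hbc
    rw [qInterval, if_neg (hc.trans (hct.trans htd)).not_gt, if_neg hc.not_gt] at ht
    exact (hsb.trans hbc).trans_lt ht.1.1

lemma ne_zero_of_mem_Lambda (hq0 : 0 < q) (hzm : zm < 0) (hzp : 0 < zp)
    (hx : x ∈ Lambda q zm zp) : x ≠ 0 := by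
  rcases hx with ⟨m, rfl⟩ | ⟨m, rfl⟩
  · exact mul_ne_zero hzm.ne (zpow_pos hq0 m).ne'
  · exact mul_ne_zero hzp.ne' (zpow_pos hq0 m).ne'

lemma exists_eq_mul_zpow_of_pos (hq0 : 0 < q) (hzm : zm < 0) (hx : x ∈ Lambda q zm zp)
    (hx0 : 0 < x) : ∃ m : ℤ, x = zp * q ^ m :=
  hx.resolve_left fun ⟨m, hm⟩ =>
    (hm.trans_lt (mul_neg_of_neg_of_pos hzm (zpow_pos hq0 m))).not_gt hx0

lemma exists_eq_mul_zpow_of_neg (hq0 : 0 < q) (hzp : 0 < zp) (hx : x ∈ Lambda q zm zp)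
    (hx0 : x < 0) : ∃ m : ℤ, x = zm * q ^ m :=
  hx.resolve_right fun ⟨m, hm⟩ => ((mul_pos hzp (zpow_pos hq0 m)).trans_eq hm.symm).not_gt hx0

lemma mul_zpow_mem_qOrbit (hq0 : 0 < q) {m n : ℤ} (h : m ≤ n) :
    z * q ^ n ∈ qOrbit q (z * q ^ m) := by
  obtain ⟨k, rfl⟩ := Int.le.dest h
  exact ⟨k, by simp only [zpow_add₀ hq0.ne', zpow_natCast, mul_assoc]⟩

lemma mem_qOrbit_iff (hq0 : 0 < q) (hq1 : q < 1) (hzm : zm < 0) (hzp : 0 < zp)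
    (hx : x ∈ Lambda q zm zp) :
    y ∈ qOrbit q x ↔ y ∈ Lambda q zm zp ∧ (0 < y ∧ y ≤ x ∨ x ≤ y ∧ y < 0) := by
  constructor
  · rintro ⟨n, rfl⟩
    have hpos : 0 < q ^ n := pow_pos hq0 n
    have hle : q ^ n ≤ 1 := pow_le_one₀ hq0.le hq1.le
    refine ⟨hx.imp ?_ ?_, ?_⟩
    iterate 2
      rintro ⟨m, rfl⟩
      exact ⟨m + n, by simp only [zpow_add₀ hq0.ne', zpow_natCast, mul_assoc]⟩
    rcases (ne_zero_of_mem_Lambda hq0 hzm hzp hx).lt_or_gt with h | h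
    · exact Or.inr ⟨by simpa using mul_le_mul_of_nonpos_left hle h.le, mul_neg_of_neg_of_pos h hpos⟩
    · exact Or.inl ⟨mul_pos h hpos, mul_le_of_le_one_right h.le hle⟩
  · rintro ⟨hy, ⟨hy0, hyx⟩ | ⟨hxy, hy0⟩⟩
    · obtain ⟨n, rfl⟩ := exists_eq_mul_zpow_of_pos hq0 hzm hy hy0
      obtain ⟨m, rfl⟩ := exists_eq_mul_zpow_of_pos hq0 hzm hx (hy0.trans_le hyx)
      rw [mul_le_mul_iff_right₀ hzp, zpow_le_zpow_iff_right_of_lt_one₀ hq0 hq1] at hyx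
      exact mul_zpow_mem_qOrbit hq0 hyx
    · obtain ⟨n, rfl⟩ := exists_eq_mul_zpow_of_neg hq0 hzp hy hy0
      obtain ⟨m, rfl⟩ := exists_eq_mul_zpow_of_neg hq0 hzp hx (hxy.trans_lt hy0)
      rw [mul_le_mul_left_of_neg hzm, zpow_le_zpow_iff_right_of_lt_one₀ hq0 hq1] at hxy
      exact mul_zpow_mem_qOrbit hq0 hxy

lemma abs_le_mul_abs_of_mem_Lambda (hq0 : 0 < q) (hq1 : q < 1) (hzm : zm < 0) (hzp : 0 < zp)
    (hx : x ∈ Lambda q zm zp) (hy : y ∈ Lambda q zm zp)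
    (h : 0 < y ∧ y < x ∨ x < y ∧ y < 0) : |y| ≤ q * |x| := by
  obtain ⟨n, rfl⟩ := (mem_qOrbit_iff hq0 hq1 hzm hzp hx).2
    ⟨hy, h.imp (And.imp_right le_of_lt) (And.imp_left le_of_lt)⟩
  have hn : n ≠ 0 := by rintro rfl; simp at h
  rw [abs_mul, abs_of_pos (pow_pos hq0 n), mul_comm]
  exact mul_le_mul_of_nonneg_right (pow_le_of_le_one hq0.le hq1.le hn) (abs_nonneg x)

lemma hasSum_indicator_qOrbit (hq0 : 0 < q) (hq1 : q < 1) (hx : x ≠ 0) (l : ℕ) :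
    HasSum ((qOrbit q x).indicator fun y => y ^ (l + 1))
      (x ^ (l + 1) / (1 - q ^ (l + 1))) := by
  have hinj : Function.Injective fun n : ℕ => x * q ^ n := fun m n h =>
    (pow_right_strictAnti₀ hq0 hq1).injective (mul_left_cancel₀ hx h)
  rw [← hasSum_subtype_iff_indicator]
  refine (hinj.hasSum_range_iff (f := fun y : ℝ => y ^ (l + 1))).2 ?_
  have hgeom := (hasSum_geometric_of_lt_one (pow_nonneg hq0.le (l + 1))
    (pow_lt_one₀ hq0.le hq1 l.succ_ne_zero)).mul_left (x ^ (l + 1))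
  simpa only [Function.comp_def, mul_pow, pow_right_comm, div_eq_mul_inv] using hgeom

lemma indicator_qInterval (hq0 : 0 < q) (hq1 : q < 1) (hzm : zm < 0) (hzp : 0 < zp)
    (ha : a ∈ Lambda q zm zp) (hb : b ∈ Lambda q zm zp) (hab : a < b) (f : ℝ → ℝ) :
    (qInterval q zm zp a b).indicator (fun y => |y| * f y) =
      (qOrbit q b).indicator (fun y => y * f y) - (qOrbit q a).indicator fun y => y * f y := by
  -- With `O = qOrbit q`, the interval is `O b \ O a`, `O a \ O b` or `O a ∪ O b`, according as `0`
  -- lies below it, above it or inside.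
  ext y
  have hy0 := ne_zero_of_mem_Lambda (x := y) hq0 hzm hzp
  simp only [Pi.sub_apply, Set.indicator_apply, mem_qOrbit_iff hq0 hq1 hzm hzp ha,
    mem_qOrbit_iff hq0 hq1 hzm hzp hb, qInterval]
  rcases le_or_gt 0 y with h | h
  · simp only [abs_of_nonneg h]
    split_ifs <;> grind
  · simp only [abs_of_neg h]
    split_ifs <;> grind

lemma hasSum_indicator_qInterval (hq0 : 0 < q) (hq1 : q < 1) (hzm : zm < 0) (hzp : 0 < zp)
    (ha : a ∈ Lambda q zm zp) (hb : b ∈ Lambda q zm zp) (hab : a < b) (l : ℕ) :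
    HasSum ((qInterval q zm zp a b).indicator fun y => |y| * y ^ l)
      ((b ^ (l + 1) - a ^ (l + 1)) / (1 - q ^ (l + 1))) := by
  rw [indicator_qInterval hq0 hq1 hzm hzp ha hb hab, sub_div]
  simp only [← pow_succ']
  exact (hasSum_indicator_qOrbit hq0 hq1 (ne_zero_of_mem_Lambda hq0 hzm hzp hb) l).sub
    (hasSum_indicator_qOrbit hq0 hq1 (ne_zero_of_mem_Lambda hq0 hzm hzp ha) l)

lemma exists_isGreatest_mul_zpow_le (hq0 : 0 < q) (hq1 : q < 1) {δ : ℝ} (hz : 0 < z)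
    (hδ : 0 < δ) :
    ∃ n : ℤ, IsGreatest {u | (∃ m : ℤ, u = z * q ^ m) ∧ u ≤ δ} (z * q ^ n) := by
  obtain ⟨n, hn, hn'⟩ := exists_mem_Ico_zpow (div_pos hδ hz) (one_lt_inv₀ hq0 |>.2 hq1)
  rw [inv_zpow', le_div_iff₀' hz] at hn
  rw [inv_zpow', div_lt_iff₀' hz] at hn'
  refine ⟨-n, ⟨⟨-n, rfl⟩, hn⟩, ?_⟩
  rintro _ ⟨⟨m, rfl⟩, hm⟩
  have hnm : -(n + 1) < m :=
    (zpow_lt_zpow_iff_right_of_lt_one₀ hq0 hq1).1 (lt_of_mul_lt_mul_left (hm.trans_lt hn') hz.le)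
  exact mul_le_mul_of_nonneg_left
    ((zpow_le_zpow_iff_right_of_lt_one₀ hq0 hq1).2 (by lia)) hz.le

lemma exists_forall_mem_qInterval_of_abs_le (hq0 : 0 < q) (hq1 : q < 1) (hzm : zm < 0)
    (hzp : 0 < zp) {δ : ℝ} (hδ : 0 < δ) :
    ∃ a ∈ Lambda q zm zp, ∃ b ∈ Lambda q zm zp, a < b ∧ -δ ≤ a ∧ b ≤ δ ∧
      ∀ z ∈ Lambda q zm zp, |z| ≤ δ → z ∈ qInterval q zm zp a b := by
  obtain ⟨m, ⟨-, hmδ⟩, hm⟩ := exists_isGreatest_mul_zpow_le hq0 hq1 (neg_pos.2 hzm) hδ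
  obtain ⟨n, ⟨-, hnδ⟩, hn⟩ := exists_isGreatest_mul_zpow_le hq0 hq1 hzp hδ
  have ha : zm * q ^ m < 0 := mul_neg_of_neg_of_pos hzm (zpow_pos hq0 m)
  have hb : 0 < zp * q ^ n := mul_pos hzp (zpow_pos hq0 n)
  refine ⟨zm * q ^ m, Or.inl ⟨m, rfl⟩, zp * q ^ n, Or.inr ⟨n, rfl⟩, ha.trans hb, by linarith, hnδ,
    fun z hz hzδ => ?_⟩
  obtain ⟨hzδ', hzδ⟩ := abs_le.1 hzδ
  rw [qInterval, if_neg hb.not_gt, if_pos ha]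
  refine ⟨?_, hz⟩
  rcases (ne_zero_of_mem_Lambda hq0 hzm hzp hz).lt_or_gt with h | h
  · obtain ⟨k, rfl⟩ := exists_eq_mul_zpow_of_neg hq0 hzp hz h
    have := hm ⟨⟨k, rfl⟩, by linarith⟩
    exact ⟨by linarith, by linarith⟩
  · obtain ⟨k, rfl⟩ := exists_eq_mul_zpow_of_pos hq0 hzm hz h
    exact ⟨by linarith, hn ⟨⟨k, rfl⟩, hzδ⟩⟩

lemma sum_abs_le_of_mem_Lambda (hq0 : 0 < q) (hq1 : q < 1) (hzm : zm < 0) (hzp : 0 < zp)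
    {δ : ℝ} (hδ : 0 < δ) {Z : Finset ℝ} (hZ : ∀ z ∈ Z, z ∈ Lambda q zm zp ∧ |z| ≤ δ) :
    ∑ z ∈ Z, |z| ≤ 2 / (1 - q) * δ := by
  have : 0 < 1 - q := sub_pos.2 hq1
  obtain ⟨a, ha, b, hb, hab, haδ, hbδ, hcover⟩ :=
    exists_forall_mem_qInterval_of_abs_le hq0 hq1 hzm hzp hδ
  have hsum := hasSum_indicator_qInterval hq0 hq1 hzm hzp ha hb hab 0
  simp only [pow_zero, mul_one, zero_add, pow_one] at hsum
  calc ∑ z ∈ Z, |z| = ∑ z ∈ Z, (qInterval q zm zp a b).indicator (fun y => |y|) z :=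
        sum_congr rfl fun z hz => by
          rw [Set.indicator_of_mem (hcover z (hZ z hz).1 (hZ z hz).2)]
    _ ≤ (b - a) / (1 - q) :=
        sum_le_hasSum Z (fun z _ => Set.indicator_nonneg (fun z _ => abs_nonneg z) z) hsum
    _ ≤ 2 * δ / (1 - q) := by gcongr; linarith
    _ = 2 / (1 - q) * δ := by ring

end Lattice

section Link

variable {q zm zp : ℝ} {M : ℕ} {x : Fin (M + 1) → ℝ} {y : Fin M → ℝ}

/-- The tuples that interlace `x`. Tuples are used instead of `Conf` so that single coordinates can
be moved freely; an interlacing tuple is automatically a configuration. -/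
def interlacingBox (q zm zp : ℝ) {M : ℕ} (x : Fin (M + 1) → ℝ) : Set (Fin M → ℝ) :=
  {y | ∀ i, y i ∈ qInterval q zm zp (x i.castSucc) (x i.succ)}

/-- The `q`-link as a function of arbitrary tuples. -/
def linkWeight (q zm zp : ℝ) {M : ℕ} (x : Fin (M + 1) → ℝ) (y : Fin M → ℝ) : ℝ :=
  if y ∈ interlacingBox q zm zp x then (∏ i, |y i|) * qpochR q q M * vprod y / vprod x else 0

lemma qlink_eq_linkWeight (X : Conf q zm zp (M + 1)) (Y : Conf q zm zp M) :
    qlink q zm zp M X Y = linkWeight q zm zp X.1 Y.1 :=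
  rfl

lemma strictMono_of_mem_interlacingBox (hx : Monotone x) (hy : y ∈ interlacingBox q zm zp x) :
    StrictMono y := fun i j hij =>
  lt_of_mem_qInterval_of_le (hy i) (hy j) (hx (Fin.succ_le_castSucc_iff.2 hij))

lemma update_mem_interlacingBox (hy : y ∈ interlacingBox q zm zp x) {j : Fin M} {t : ℝ}
    (ht : t ∈ qInterval q zm zp (x j.castSucc) (x j.succ)) :
    Function.update y j t ∈ interlacingBox q zm zp x := fun i => by
  rcases eq_or_ne i j with rfl | hij
  · rwa [Function.update_self]
  · rw [Function.update_of_ne hij]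
    exact hy i

lemma qpochR_self_eq_prod (q : ℝ) (M : ℕ) :
    qpochR q q M = ∏ l : Fin M, (1 - q ^ ((l : ℕ) + 1)) := by
  simp only [qpochR, prod_range, pow_succ']

lemma qpochR_self_pos (hq0 : 0 < q) (hq1 : q < 1) (M : ℕ) : 0 < qpochR q q M := by
  rw [qpochR_self_eq_prod]
  exact prod_pos fun l _ => sub_pos.2 (pow_lt_one₀ hq0.le hq1 (l : ℕ).succ_ne_zero)

lemma linkWeight_nonneg (hq0 : 0 < q) (hq1 : q < 1) (hx : StrictMono x) (y : Fin M → ℝ) :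
    0 ≤ linkWeight q zm zp x y := by
  unfold linkWeight
  split_ifs with hy
  · have hxv := vprod_pos hx
    have hyv := vprod_pos (strictMono_of_mem_interlacingBox hx.monotone hy)
    have hQ := qpochR_self_pos hq0 hq1 M
    positivity
  · exact le_rfl

lemma linkWeight_eq_det (x : Fin (M + 1) → ℝ) (y : Fin M → ℝ) :
    linkWeight q zm zp x y = qpochR q q M / vprod x * (Matrix.of fun i l : Fin M =>
      (qInterval q zm zp (x i.castSucc) (x i.succ)).indicator
        (fun z => |z| * z ^ (l : ℕ)) (y i)).det := by
  unfold linkWeight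
  split_ifs with hy
  · have hrows : (Matrix.of fun i l : Fin M =>
        (qInterval q zm zp (x i.castSucc) (x i.succ)).indicator
          (fun z => |z| * z ^ (l : ℕ)) (y i)) =
        Matrix.of fun i l => |y i| * Matrix.vandermonde y i l := by
      ext i l
      simp only [Matrix.of_apply, Set.indicator_of_mem (hy i), Matrix.vandermonde_apply]
    rw [hrows, Matrix.det_mul_column, ← vprod_eq_det_vandermonde]
    ring
  · obtain ⟨i, hi⟩ := not_forall.1 hy
    rw [Matrix.det_eq_zero_of_row_eq_zero i fun l => by
      rw [Matrix.of_apply, Set.indicator_of_notMem hi], mul_zero]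

lemma det_jackson_moments (q : ℝ) (x : Fin (M + 1) → ℝ) :
    (Matrix.of fun i l : Fin M =>
      (x i.succ ^ ((l : ℕ) + 1) - x i.castSucc ^ ((l : ℕ) + 1)) / (1 - q ^ ((l : ℕ) + 1))).det =
      vprod x / qpochR q q M := by
  have h := Matrix.det_mul_row (fun l : Fin M => (1 - q ^ ((l : ℕ) + 1))⁻¹)
    (Matrix.of fun i l : Fin M => x i.succ ^ ((l : ℕ) + 1) - x i.castSucc ^ ((l : ℕ) + 1))
  rw [det_sub_pow_succ, ← vprod_eq_det_vandermonde, prod_inv_distrib, ← qpochR_self_eq_prod] at h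
  simpa only [Matrix.of_apply, div_eq_inv_mul] using h

theorem hasSum_linkWeight (hq0 : 0 < q) (hq1 : q < 1) (hzm : zm < 0) (hzp : 0 < zp)
    (hx : StrictMono x) (hxΛ : ∀ i, x i ∈ Lambda q zm zp) :
    HasSum (linkWeight q zm zp x) 1 := by
  have hc : 0 < qpochR q q M / vprod x := div_pos (qpochR_self_pos hq0 hq1 M) (vprod_pos hx)
  let det : ContinuousMultilinearMap ℝ (fun _ : Fin M => Fin M → ℝ) ℝ :=
    ⟨Matrix.detRowAlternating.toMultilinearMap, continuous_id.matrix_det⟩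
  let row (i : Fin M) (z : ℝ) (l : Fin M) : ℝ :=
    (qInterval q zm zp (x i.castSucc) (x i.succ)).indicator (fun z => |z| * z ^ (l : ℕ)) z
  have hweight (y : Fin M → ℝ) :
      linkWeight q zm zp x y = qpochR q q M / vprod x * det fun i => row i (y i) :=
    linkWeight_eq_det x y
  have hrow (i : Fin M) : HasSum (row i) fun l =>
      (x i.succ ^ ((l : ℕ) + 1) - x i.castSucc ^ ((l : ℕ) + 1)) / (1 - q ^ ((l : ℕ) + 1)) :=
    Pi.hasSum.2 fun l => hasSum_indicator_qInterval hq0 hq1 hzm hzp (hxΛ _) (hxΛ _)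
      (hx Fin.castSucc_lt_succ) l
  have hdet := hasSum_multilinear_of_nonneg det hrow fun y =>
    nonneg_of_mul_nonneg_right (hweight y ▸ linkWeight_nonneg hq0 hq1 hx y) hc
  have hmass : qpochR q q M / vprod x * (vprod x / qpochR q q M) = 1 := by
    rw [div_mul_div_cancel₀ (vprod_pos hx).ne', div_self (qpochR_self_pos hq0 hq1 M).ne']
  rw [funext hweight, ← hmass, ← det_jackson_moments]
  exact hdet.mul_left _

end Link

section OuterEndpoint

variable {q zm zp a b s t z : ℝ}

lemma left_mem_qInterval_iff (hab : a < b) :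
    a ∈ qInterval q zm zp a b ↔ a ∈ Lambda q zm zp ∧ a < 0 := by
  unfold qInterval
  split_ifs <;> grind

lemma right_mem_qInterval_iff (hab : a < b) (hb : b ≠ 0) :
    b ∈ qInterval q zm zp a b ↔ b ∈ Lambda q zm zp ∧ 0 < b := by
  unfold qInterval
  split_ifs <;> grind

lemma abs_sub_le_of_abs_le_mul (hq1 : q < 1) (hst : |s| ≤ |t|) (htz : |t| ≤ q * |z|) :
    |z - s| ≤ 2 / (1 - q) * |z - t| := by
  have h1q : 0 < 1 - q := sub_pos.2 hq1
  have hqz : q * |z| ≤ |z| := mul_le_of_le_one_left (abs_nonneg z) hq1.le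
  have hupper : |z - s| ≤ 2 * |z| := by linarith [abs_sub z s]
  have hlower : (1 - q) * |z| ≤ |z - t| := by linarith [abs_sub_abs_le_abs_sub z t]
  calc |z - s| ≤ 2 * |z| := hupper
    _ = 2 / (1 - q) * ((1 - q) * |z|) := by field_simp
    _ ≤ 2 / (1 - q) * |z - t| := by gcongr

lemma abs_le_mul_abs_or_abs_sub_le (hq0 : 0 < q) (hq1 : q < 1) (hzm : zm < 0) (hzp : 0 < zp)
    (hs : s ∈ qInterval q zm zp a b) (ht : t ∈ qInterval q zm zp a b) (htab : t = a ∨ t = b)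
    (hz : z ∈ Lambda q zm zp) (hzt : z ≠ t) (hzab : z ≤ a ∨ b ≤ z) :
    |t| ≤ q * |z| ∨ |z - s| ≤ |z - t| := by
  have htΛ := mem_Lambda_of_mem_qInterval ht
  have hgap := abs_le_mul_abs_of_mem_Lambda hq0 hq1 hzm hzp hz htΛ
  obtain ⟨has, hsb⟩ := mem_Icc_of_mem_qInterval hs
  rcases (has.trans hsb).eq_or_lt with rfl | hab
  · obtain rfl : s = a := le_antisymm hsb has
    exact Or.inr (by rw [or_self] at htab; rw [htab])
  rcases htab with rfl | rfl
  · have ht0 := ((left_mem_qInterval_iff hab).1 ht).2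
    rcases hzab with hz' | hz'
    · exact Or.inl (hgap (Or.inr ⟨hz'.lt_of_ne hzt, ht0⟩))
    · right
      rw [abs_of_nonneg (sub_nonneg.2 (hsb.trans hz')), abs_of_nonneg (by linarith)]
      linarith
  · have ht0 := ((right_mem_qInterval_iff hab (ne_zero_of_mem_Lambda hq0 hzm hzp htΛ)).1 ht).2
    rcases hzab with hz' | hz'
    · right
      rw [abs_of_nonpos (sub_nonpos.2 (hz'.trans has)), abs_of_nonpos (by linarith)]
      linarith
    · exact Or.inl (hgap (Or.inl ⟨ht0, hz'.lt_of_ne' hzt⟩))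

end OuterEndpoint

section CoordinateBound

variable {q zm zp t : ℝ} {M : ℕ} {x : Fin (M + 1) → ℝ} {j : Fin M}

lemma abs_vprod_le_pow_mul_abs_vprod_update (hq0 : 0 < q) (hq1 : q < 1) (hzm : zm < 0)
    (hzp : 0 < zp) (hx : StrictMono x) {y : Fin M → ℝ} (hy : y ∈ interlacingBox q zm zp x)
    (ht : t ∈ qInterval q zm zp (x j.castSucc) (x j.succ))
    (htx : t = x j.castSucc ∨ t = x j.succ) (hyt : |y j| ≤ |t|) :
    |vprod y| ≤ (2 / (1 - q)) ^ #{i | |t| ≤ |y i|} * |vprod (Function.update y j t)| := by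
  have h1q : 0 < 1 - q := sub_pos.2 hq1
  have hD : 1 ≤ 2 / (1 - q) := (one_le_div₀ h1q).2 (by linarith)
  refine abs_vprod_le_abs_vprod_update j t _ hD fun i hij => ?_
  have hit : y i ≠ t := by
    have hmono := strictMono_of_mem_interlacingBox hx.monotone (update_mem_interlacingBox hy ht)
    simpa [hij] using hmono.injective.ne hij
  have hout : y i ≤ x j.castSucc ∨ x j.succ ≤ y i := by
    obtain ⟨hlo, hhi⟩ := mem_Icc_of_mem_qInterval (hy i)
    rcases hij.lt_or_gt with h | h
    · exact Or.inl (hhi.trans (hx.monotone (Fin.succ_le_castSucc_iff.2 h)))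
    · exact Or.inr ((hx.monotone (Fin.succ_le_castSucc_iff.2 h)).trans hlo)
  rcases abs_le_mul_abs_or_abs_sub_le hq0 hq1 hzm hzp (hy j) ht htx
    (mem_Lambda_of_mem_qInterval (hy i)) hit hout with h | h
  · have hti : |t| ≤ |y i| := h.trans (mul_le_of_le_one_left (abs_nonneg _) hq1.le)
    rw [if_pos (mem_filter_univ i |>.2 hti)]
    exact abs_sub_le_of_abs_le_mul hq1 hyt h
  · refine h.trans (le_mul_of_one_le_left (abs_nonneg _) ?_)
    split_ifs
    exacts [hD, le_rfl]

lemma linkWeight_mul_abs_le (hq0 : 0 < q) (hq1 : q < 1) (hzm : zm < 0) (hzp : 0 < zp)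
    (hx : StrictMono x) {y : Fin M → ℝ} (hy : y ∈ interlacingBox q zm zp x)
    (ht : t ∈ qInterval q zm zp (x j.castSucc) (x j.succ))
    (htx : t = x j.castSucc ∨ t = x j.succ) (hyt : |y j| ≤ |t|) :
    linkWeight q zm zp x y * |t| ≤ (2 / (1 - q)) ^ #{i | |t| ≤ |y i|} *
      (|y j| * linkWeight q zm zp x (Function.update y j t)) := by
  have hu := update_mem_interlacingBox hy ht
  have hv := abs_vprod_le_pow_mul_abs_vprod_update hq0 hq1 hzm hzp hx hy ht htx hyt
  rw [abs_of_pos (vprod_pos (strictMono_of_mem_interlacingBox hx.monotone hy)),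
    abs_of_pos (vprod_pos (strictMono_of_mem_interlacingBox hx.monotone hu))] at hv
  have hprod : (∏ i, |y i|) * |t| = |y j| * ∏ i, |Function.update y j t i| := by
    rw [← mul_prod_erase univ _ (mem_univ j), ← mul_prod_erase univ (fun i => |_|) (mem_univ j),
      Function.update_self, prod_congr rfl fun i hi => by
        rw [← Function.update_of_ne (ne_of_mem_erase hi) t y]]
    ring
  have hQ := qpochR_self_pos hq0 hq1 M
  have hV := vprod_pos hx
  rw [linkWeight, if_pos hy, linkWeight, if_pos hu]
  calc (∏ i, |y i|) * qpochR q q M * vprod y / vprod x * |t|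
      = (∏ i, |y i|) * |t| * (qpochR q q M / vprod x) * vprod y := by ring
    _ ≤ (∏ i, |y i|) * |t| * (qpochR q q M / vprod x) *
          ((2 / (1 - q)) ^ #{i | |t| ≤ |y i|} * vprod (Function.update y j t)) := by gcongr
    _ = _ := by rw [hprod]; ring

lemma sum_linkWeight_le_of_abs_le_mul (hq0 : 0 < q) (hq1 : q < 1) (hzm : zm < 0) (hzp : 0 < zp)
    (hx : StrictMono x) (hxΛ : ∀ i, x i ∈ Lambda q zm zp)
    (ht : t ∈ qInterval q zm zp (x j.castSucc) (x j.succ))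
    (htx : t = x j.castSucc ∨ t = x j.succ) {η : ℝ} (hη0 : 0 < η) (hη1 : η ≤ 1) {n : ℕ}
    {S : Finset (Fin M → ℝ)} (hS : ∀ y ∈ S, y ∈ interlacingBox q zm zp x)
    (hSt : ∀ y ∈ S, |y j| ≤ η * |t|) (hSn : ∀ y ∈ S, #{i | |t| ≤ |y i|} ≤ n) :
    ∑ y ∈ S, linkWeight q zm zp x y ≤ (2 / (1 - q)) ^ (n + 1) * η := by
  have h1q : 0 < 1 - q := sub_pos.2 hq1
  have hD : 1 ≤ 2 / (1 - q) := (one_le_div₀ h1q).2 (by linarith)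
  have ht0 : 0 < |t| :=
    abs_pos.2 (ne_zero_of_mem_Lambda hq0 hzm hzp (mem_Lambda_of_mem_qInterval ht))
  have hW := linkWeight_nonneg (zm := zm) (zp := zp) hq0 hq1 hx
  have hZ : ∑ z ∈ S.image (· j), |z| ≤ 2 / (1 - q) * (η * |t|) := by
    refine sum_abs_le_of_mem_Lambda hq0 hq1 hzm hzp (mul_pos hη0 ht0) fun z hz => ?_
    obtain ⟨y, hy, rfl⟩ := mem_image.1 hz
    exact ⟨mem_Lambda_of_mem_qInterval (hS y hy j), hSt y hy⟩
  have hU : ∑ u ∈ S.image (Function.update · j t), linkWeight q zm zp x u ≤ 1 :=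
    sum_le_hasSum _ (fun u _ => hW u) (hasSum_linkWeight hq0 hq1 hzm hzp hx hxΛ)
  refine le_of_mul_le_mul_right ?_ ht0
  calc (∑ y ∈ S, linkWeight q zm zp x y) * |t|
      = ∑ y ∈ S, linkWeight q zm zp x y * |t| := sum_mul ..
    _ ≤ ∑ y ∈ S, (2 / (1 - q)) ^ n * (|y j| * linkWeight q zm zp x (Function.update y j t)) := by
        refine sum_le_sum fun y hy => ?_
        refine (linkWeight_mul_abs_le hq0 hq1 hzm hzp hx (hS y hy) ht htx
          ((hSt y hy).trans (mul_le_of_le_one_left ht0.le hη1))).trans ?_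
        exact mul_le_mul_of_nonneg_right (pow_le_pow_right₀ hD (hSn y hy))
          (mul_nonneg (abs_nonneg _) (hW _))
    _ ≤ (2 / (1 - q)) ^ n * ((2 / (1 - q) * (η * |t|)) * 1) := by
        rw [← mul_sum]
        refine mul_le_mul_of_nonneg_left ?_ (by positivity)
        exact (sum_mul_update_le S j t abs_nonneg hW).trans
          (mul_le_mul hZ hU (sum_nonneg fun u _ => hW u) (by positivity))
    _ = (2 / (1 - q)) ^ (n + 1) * η * |t| := by ring

end CoordinateBound

section Counting

variable {M k : ℕ} {x : Fin (M + 1) → ℝ} {r : ℝ}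

lemma card_filter_abs_castSucc_or_succ_le (x : Fin (M + 1) → ℝ) (r : ℝ) :
    #{i : Fin M | r ≤ |x i.castSucc| ∨ r ≤ |x i.succ|} ≤ 2 * #{p | r ≤ |x p|} := by
  have hcomp {f : Fin M → Fin (M + 1)} (hf : Function.Injective f) :
      #{i | r ≤ |x (f i)|} ≤ #{p | r ≤ |x p|} :=
    card_le_card_of_injOn f (by simp [Set.MapsTo]) hf.injOn
  rw [filter_or, two_mul]
  exact (card_union_le _ _).trans
    (add_le_add (hcomp (Fin.castSucc_injective M)) (hcomp (Fin.succ_injective M)))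

lemma card_filter_abs_le_of_mem_interlacingBox {q zm zp : ℝ} {y : Fin M → ℝ}
    (hy : y ∈ interlacingBox q zm zp x) (r : ℝ) :
    #{i | r ≤ |y i|} ≤ 2 * #{p | r ≤ |x p|} := by
  refine (card_le_card (monotone_filter_right _ fun i _ hi => ?_)).trans
    (card_filter_abs_castSucc_or_succ_le x r)
  obtain ⟨hlo, hhi⟩ := mem_Icc_of_mem_qInterval (hy i)
  exact le_max_iff.1 (hi.trans (abs_le_max_abs_abs hlo hhi))

lemma le_card_filter_outer (hx : Monotone x) (hkM : k ≤ M)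
    (hk : k ≤ #{p | r ≤ |x p|}) : k ≤ #{j : Fin M | x j.castSucc ≤ -r ∨ r ≤ x j.succ} := by
  by_cases hall : ∀ j : Fin M, x j.castSucc ≤ -r ∨ r ≤ x j.succ
  · rwa [filter_true_of_mem fun j _ => hall j, card_fin]
  -- The gap `j₀` lies inside `(-r, r)`, so a point of absolute value at least `r` is the endpoint
  -- farther from `j₀` of one of the other gaps.
  obtain ⟨j₀, hj₀⟩ := not_forall.1 hall
  obtain ⟨hlo, hhi⟩ := not_or.1 hj₀
  rw [not_le] at hlo hhi
  have hcs : x j₀.castSucc ≤ x j₀.succ := hx Fin.castSucc_lt_succ.le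
  refine hk.trans ((card_le_card fun p hp => ?_).trans
    (card_image_le (f := j₀.castSucc.succAbove)))
  have hp : r ≤ |x p| := (mem_filter_univ p).1 hp
  have hne : p ≠ j₀.castSucc := by
    rintro rfl
    exact (abs_lt.2 ⟨hlo, hcs.trans_lt hhi⟩).not_ge hp
  obtain ⟨j, rfl⟩ := Fin.exists_succAbove_eq hne
  refine mem_image_of_mem _ ((mem_filter_univ j).2 ?_)
  rcases lt_or_ge j j₀ with hj | hj
  · rw [Fin.succAbove_castSucc_of_lt _ _ hj] at hp
    have : x j.castSucc ≤ x j₀.castSucc := hx (Fin.castSucc_le_castSucc_iff.2 hj.le)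
    exact Or.inl ((le_abs'.1 hp).resolve_right (by linarith))
  · rw [Fin.succAbove_castSucc_of_le _ _ hj] at hp
    have : x j₀.castSucc ≤ x j.succ := hcs.trans (hx (Fin.succ_le_succ_iff.2 hj))
    exact Or.inr ((le_abs'.1 hp).resolve_left (by linarith))

end Counting

section UnionBound

variable {q zm zp r η : ℝ} {M k : ℕ} {x : Fin (M + 1) → ℝ}

lemma exists_outer_endpoint (hq0 : 0 < q) (hzm : zm < 0) (hzp : 0 < zp) (hx : StrictMono x)
    (hxΛ : ∀ i, x i ∈ Lambda q zm zp) (hr : 0 < r) {j : Fin M}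
    (hj : x j.castSucc ≤ -r ∨ r ≤ x j.succ) :
    ∃ t ∈ qInterval q zm zp (x j.castSucc) (x j.succ),
      (t = x j.castSucc ∨ t = x j.succ) ∧ r ≤ |t| := by
  have hlt : x j.castSucc < x j.succ := hx Fin.castSucc_lt_succ
  rcases hj with hj | hj
  · exact ⟨_, (left_mem_qInterval_iff hlt).2 ⟨hxΛ _, by linarith⟩, Or.inl rfl,
      le_abs'.2 (Or.inl hj)⟩
  · exact ⟨_, (right_mem_qInterval_iff hlt (ne_zero_of_mem_Lambda hq0 hzm hzp (hxΛ _))).2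
      ⟨hxΛ _, by linarith⟩, Or.inr rfl, le_abs'.2 (Or.inr hj)⟩

lemma sum_linkWeight_le_of_card_lt (hq0 : 0 < q) (hq1 : q < 1) (hzm : zm < 0) (hzp : 0 < zp)
    (hx : StrictMono x) (hxΛ : ∀ i, x i ∈ Lambda q zm zp) (hr : 0 < r) (hη0 : 0 < η)
    (hη1 : η ≤ 1) (hkM : k ≤ M) {m : ℕ} (hk : k ≤ #{p | r ≤ |x p|})
    (hm : #{p | r ≤ |x p|} ≤ m) {S : Finset (Fin M → ℝ)}
    (hS : ∀ y ∈ S, y ∈ interlacingBox q zm zp x) (hSk : ∀ y ∈ S, #{i | η * r < |y i|} < k) :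
    ∑ y ∈ S, linkWeight q zm zp x y ≤ 2 * m * ((2 / (1 - q)) ^ (2 * m + 1) * η) := by
  set G : Finset (Fin M) := {j | x j.castSucc ≤ -r ∨ r ≤ x j.succ}
  have hGm : #G ≤ 2 * m := by
    refine (card_le_card (monotone_filter_right _ fun j _ hj => ?_)).trans
      ((card_filter_abs_castSucc_or_succ_le x r).trans (by gcongr))
    exact hj.imp (fun h => le_abs'.2 (Or.inl h)) (fun h => le_abs'.2 (Or.inr h))
  have hsmall : ∀ y ∈ S, ∃ j ∈ G, |y j| ≤ η * r := fun y hy => by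
    obtain ⟨j, hjG, hj⟩ := exists_mem_notMem_of_card_lt_card
      ((hSk y hy).trans_le (le_card_filter_outer hx.monotone hkM hk))
    exact ⟨j, hjG, not_lt.1 fun h => hj ((mem_filter_univ j).2 h)⟩
  have hcoord : ∀ j ∈ G, ∑ y ∈ S with |y j| ≤ η * r, linkWeight q zm zp x y ≤
      (2 / (1 - q)) ^ (2 * m + 1) * η := fun j hj => by
    obtain ⟨t, ht, htx, hrt⟩ :=
      exists_outer_endpoint hq0 hzm hzp hx hxΛ hr ((mem_filter_univ j).1 hj)
    refine sum_linkWeight_le_of_abs_le_mul hq0 hq1 hzm hzp hx hxΛ ht htx hη0 hη1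
      (fun y hy => hS y (mem_filter.1 hy).1)
      (fun y hy => (mem_filter.1 hy).2.trans (by gcongr)) fun y hy => ?_
    calc #{i | |t| ≤ |y i|} ≤ #{i | r ≤ |y i|} :=
          card_le_card (monotone_filter_right _ fun i _ hi => hrt.trans hi)
      _ ≤ 2 * #{p | r ≤ |x p|} :=
          card_filter_abs_le_of_mem_interlacingBox (hS y (mem_filter.1 hy).1) r
      _ ≤ 2 * m := by gcongr
  have : 0 < 1 - q := sub_pos.2 hq1
  calc ∑ y ∈ S, linkWeight q zm zp x y
      ≤ ∑ j ∈ G, ∑ y ∈ S with |y j| ≤ η * r, linkWeight q zm zp x y :=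
        sum_le_sum_sum_filter (fun y _ => linkWeight_nonneg hq0 hq1 hx y) hsmall
    _ ≤ #G * ((2 / (1 - q)) ^ (2 * m + 1) * η) := by
        rw [← nsmul_eq_mul]
        exact sum_le_card_nsmul _ _ _ hcoord
    _ ≤ 2 * m * ((2 / (1 - q)) ^ (2 * m + 1) * η) := by
        gcongr
        exact_mod_cast hGm

end UnionBound

section VariationalSeries

variable {q zm zp : ℝ} {N : ℕ} {X : Conf q zm zp N} {v : Fin N → ℝ}

namespace IsVarSeries

lemma antitone_abs (h : IsVarSeries q zm zp X v) : Antitone fun i => |v i| :=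
  antitone_iff_forall_lt.2 fun i j hij => (h.2 i j hij).elim le_of_lt fun h => h.1.le

lemma card_filter_eq (h : IsVarSeries q zm zp X v) (p : ℝ → Prop) :
    #{i | p (X.1 i)} = #{i | p (v i)} := by
  obtain ⟨⟨σ, rfl⟩, -⟩ := h
  exact (card_equiv σ fun i => by simp only [mem_filter_univ, Function.comp_apply]).symm

lemma lt_card_filter_abs_le (h : IsVarSeries q zm zp X v) (i : Fin N) :
    (i : ℕ) < #{l | |v i| ≤ |X.1 l|} := by
  rw [h.card_filter_eq fun z => |v i| ≤ |z|, Nat.lt_iff_add_one_le,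
    ← Fin.card_Iic]
  exact card_le_card fun l hl => (mem_filter_univ l).2 (h.antitone_abs (mem_Iic.1 hl))

lemma card_filter_lt_abs_le (h : IsVarSeries q zm zp X v) {i : Fin N} {δ : ℝ} (hi : |v i| ≤ δ) :
    #{l | δ < |X.1 l|} ≤ i := by
  rw [h.card_filter_eq fun z => δ < |z|, ← Fin.card_Iio]
  refine card_le_card fun l hl => mem_Iio.2 (lt_of_not_ge fun hil => ?_)
  exact ((h.antitone_abs hil).trans hi).not_gt ((mem_filter_univ l).1 hl)

lemma card_filter_abs_le_le (h : IsVarSeries q zm zp X v) (i : Fin N) :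
    #{l | |v i| ≤ |X.1 l|} ≤ i + 2 :=
  (card_filter_abs_le_of_injective X.2.1.injective _).trans
    (Nat.add_le_add_right (h.card_filter_lt_abs_le le_rfl) 2)

lemma abs_apply_pos (hq0 : 0 < q) (hzm : zm < 0) (hzp : 0 < zp) (h : IsVarSeries q zm zp X v)
    (i : Fin N) : 0 < |v i| := by
  obtain ⟨⟨σ, rfl⟩, -⟩ := h
  exact abs_pos.2 (ne_zero_of_mem_Lambda hq0 hzm hzp (X.2.2 (σ i)))

end IsVarSeries

lemma sum_qlink_le_of_abs_varSeries_le {M : ℕ} {X : Conf q zm zp (M + 1)}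
    {vX : Fin (M + 1) → ℝ} (hq0 : 0 < q) (hq1 : q < 1) (hzm : zm < 0) (hzp : 0 < zp)
    (hvX : IsVarSeries q zm zp X vX) (i : Fin M) {η : ℝ} (hη0 : 0 < η) (hη1 : η ≤ 1)
    {T : Finset (Conf q zm zp M)}
    (hT : ∀ Y ∈ T, ∃ vY, IsVarSeries q zm zp Y vY ∧ |vY i| ≤ η * |vX i.castSucc|) :
    ∑ Y ∈ T, qlink q zm zp M X Y ≤
      2 * (i + 2 : ℕ) * ((2 / (1 - q)) ^ (2 * (i + 2 : ℕ) + 1) * η) := by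
  have hcoe : Function.Injective fun Y : Conf q zm zp M => Y.1 := Subtype.val_injective
  let S := {y ∈ T.image fun Y => Y.1 | y ∈ interlacingBox q zm zp X.1}
  have hsum : ∑ Y ∈ T, qlink q zm zp M X Y = ∑ y ∈ S, linkWeight q zm zp X.1 y := by
    have hbox : ∀ y ∈ T.image fun Y => Y.1, linkWeight q zm zp X.1 y ≠ 0 →
        y ∈ interlacingBox q zm zp X.1 := fun y _ hy => by_contra fun h => hy (if_neg h)
    rw [sum_filter_of_ne hbox, sum_image hcoe.injOn]
    exact sum_congr rfl fun Y _ => qlink_eq_linkWeight X Y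
  rw [hsum]
  refine sum_linkWeight_le_of_card_lt hq0 hq1 hzm hzp X.2.1 X.2.2
    (hvX.abs_apply_pos hq0 hzm hzp i.castSucc) hη0 hη1 i.2 (hvX.lt_card_filter_abs_le i.castSucc)
    (hvX.card_filter_abs_le_le i.castSucc) (fun y hy => (mem_filter.1 hy).2) fun y hy => ?_
  obtain ⟨Y, hY, rfl⟩ := mem_image.1 (mem_filter.1 hy).1
  obtain ⟨vY, hvY, hle⟩ := hT Y hY
  exact Nat.lt_succ_of_le (hvY.card_filter_lt_abs_le hle)

end VariationalSeries

end TailBound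

/-- Lemma 3.11: for fixed k ≥ 1 and any ε > 0 there is C > 0 such that for all N = M+1 > k
and X ∈ 𝔾_N, the Λ^N_{N−1}(X,·)-probability of the event
log_q|y_{(k)}| − log_q|x_{(k)}| ≥ C, i.e. |y_{(k)}| ≤ q^C |x_{(k)}|, is at most ε. -/
theorem kth_term_tail_bound (q zm zp : ℝ) (hq0 : 0 < q) (hq1 : q < 1) (hzm : zm < 0)
    (hzp : 0 < zp) (k : ℕ) (hk : 1 ≤ k) (ε : ℝ) (hε : 0 < ε) :
    ∃ C : ℝ, 0 < C ∧
      ∀ M : ℕ, ∀ _hM : k ≤ M, ∀ X : Conf q zm zp (M+1), ∀ vX : Fin (M+1) → ℝ,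
        IsVarSeries q zm zp X vX →
        ∑' Y : {Y : Conf q zm zp M // ∃ vY : Fin M → ℝ,
            IsVarSeries q zm zp Y vY ∧
            |vY ⟨k - 1, by omega⟩| ≤ Real.rpow q C * |vX ⟨k - 1, by omega⟩|},
          qlink q zm zp M X Y.1 ≤ ε := by
  obtain ⟨k, rfl⟩ := Nat.exists_eq_add_of_le' hk
  have : 0 < 1 - q := sub_pos.2 hq1
  set K : ℝ := 2 * (k + 2 : ℕ) * (2 / (1 - q)) ^ (2 * (k + 2) + 1)
  have hK : 0 < K := by positivity
  obtain ⟨n, hn⟩ := exists_pow_lt_of_lt_one (div_pos hε hK) hq1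
  have hn' : q ^ (n + 1) ≤ ε / K := (pow_le_pow_of_le_one hq0.le hq1.le n.le_succ).trans hn.le
  refine ⟨(n + 1 : ℕ), by positivity, fun M hM X vX hvX => ?_⟩
  refine tsum_le_of_sum_le' hε.le fun T => ?_
  calc ∑ Y ∈ T, qlink q zm zp M X Y.1
      = ∑ Y ∈ T.map (Function.Embedding.subtype _), qlink q zm zp M X Y := by
        rw [Finset.sum_map]; rfl
    _ ≤ 2 * (k + 2 : ℕ) * ((2 / (1 - q)) ^ (2 * (k + 2) + 1) * q ^ (n + 1)) := by
        refine sum_qlink_le_of_abs_varSeries_le hq0 hq1 hzm hzp hvX ⟨k, hM⟩ (pow_pos hq0 _)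
          (pow_le_one₀ hq0.le hq1.le) fun Y hY => ?_
        obtain ⟨Y, -, rfl⟩ := Finset.mem_map.1 hY
        rw [← show Real.rpow q (n + 1 : ℕ) = q ^ (n + 1) from Real.rpow_natCast q (n + 1)]
        exact Y.2
    _ = K * q ^ (n + 1) := (mul_assoc ..).symm
    _ ≤ ε := (le_div_iff₀' hK).1 hn'

end
end

section
/- Let (α,β,γ,δ) be an admissible and nondegenerate quadruple and r ∈ ℤ. Then lim_{N→∞} (γδ)^{N−1} q^{−N(N−1)} · h_{N−r}(α,β,γq^{1−N},δq^{1−N}) / (k_{N−r}(α,β,γq^{1−N},δq^{1−N}))² = 𝔥_r, i.e. h_{N−r}/k_{N−r}² is asymptotically equivalent to q^{N(N−1)} (γδ)^{1−N} 𝔥_r as N → ∞. -/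
open scoped BigOperators
open Classical

noncomputable section

/-- finite q-Pochhammer symbol (a;q)_n in ℂ. -/
def qpochC (a : ℂ) (q : ℝ) (n : ℕ) : ℂ := ∏ m ∈ Finset.range n, (1 - a * (q : ℂ) ^ m)

/-- infinite q-Pochhammer symbol (a;q)_∞ in ℂ. -/
def qpochInf (a : ℂ) (q : ℝ) : ℂ := ∏' m : ℕ, (1 - a * (q : ℂ) ^ m)

/-- theta function θ_q(u) = (u;q)_∞ (q/u;q)_∞. -/
def thetaQ (q : ℝ) (u : ℂ) : ℂ := qpochInf u q * qpochInf ((q : ℂ) / u) q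

/-- admissible pair of parameters. -/
def AdmissiblePair (q zm zp : ℝ) (a b : ℂ) : Prop :=
  a ≠ 0 ∧ b ≠ 0 ∧
    ((a.im ≠ 0 ∧ b = (starRingEnd ℂ) a) ∨
     (a.im = 0 ∧ b.im = 0 ∧
       ∃ s t : ℝ, s ∈ Lambda q zm zp ∧ t ∈ Lambda q zm zp ∧ s < t ∧
         (∀ u ∈ Lambda q zm zp, ¬ (s < u ∧ u < t)) ∧
         a⁻¹.re ∈ Set.Ioo s t ∧ b⁻¹.re ∈ Set.Ioo s t))

/-- admissible nondegenerate quadruple: (α,β), (γ,δ) admissible pairs and γδq > αβ. -/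
def AdmissibleNondeg (q zm zp : ℝ) (al be ga de : ℂ) : Prop :=
  AdmissiblePair q zm zp al be ∧ AdmissiblePair q zm zp ga de ∧
    (al * be).re < (ga * de).re * q

/-- the weight w(x; a,b,c,d) = |x| (ax;q)_∞(bx;q)_∞ / ((cx;q)_∞(dx;q)_∞). -/
def weightC (q : ℝ) (a b c d : ℂ) (x : ℝ) : ℂ :=
  (|x| : ℝ) * (qpochInf (a * x) q * qpochInf (b * x) q) /
    (qpochInf (c * x) q * qpochInf (d * x) q)

/-- pseudo big q-Jacobi polynomial P_n(x; a,b,c,d). -/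
def pbqJ (q : ℝ) (a b c d : ℂ) (n : ℕ) (x : ℂ) : ℂ :=
  ∑ k ∈ Finset.range (n + 1),
    qpochC ((q : ℂ) ^ (-(n : ℤ))) q k * qpochC (c * d * (q : ℂ) ^ ((n : ℤ) + 1) / (a * b)) q k *
        qpochC (c * x) q k /
      (qpochC (c * (q : ℂ) / b) q k * qpochC (c * (q : ℂ) / a) q k * qpochC (q : ℂ) q k) *
      (q : ℂ) ^ k

/-- leading coefficient k_n(a,b,c,d) of P_n. -/
def kCoeff (q : ℝ) (a b c d : ℂ) (n : ℕ) : ℂ :=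
  c ^ n * qpochC (c * d * (q : ℂ) ^ ((n : ℤ) + 1) / (a * b)) q n /
    (qpochC (c * (q : ℂ) / b) q n * qpochC (c * (q : ℂ) / a) q n)

/-- the q-hypergeometric series ₂φ₁(A,B;C;q,Z). -/
def phi21 (q : ℝ) (A B C Z : ℂ) : ℂ :=
  ∑' m : ℕ, qpochC A q m * qpochC B q m / (qpochC C q m * qpochC (q : ℂ) q m) * Z ^ m

/-- principal branch square root. -/
def csqrt (z : ℂ) : ℂ := z ^ (1 / 2 : ℂ)


/-- the weight w_N with parameters (α,β,γq^{1−N},δq^{1−N}). -/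
def wN (q : ℝ) (al be ga de : ℂ) (N : ℕ) (x : ℝ) : ℂ :=
  weightC q al be (ga * (q : ℂ) ^ (1 - (N : ℤ))) (de * (q : ℂ) ^ (1 - (N : ℤ))) x

/-- the function 𝔉_r(x). -/
def scrF (q : ℝ) (al be ga de : ℂ) (r : ℤ) (x : ℝ) : ℂ :=
  csqrt ((|x| : ℝ) * qpochInf (al * x) q * qpochInf (be * x) q /
      (thetaQ q (ga * x) * thetaQ q (de * x))) *
    (x : ℂ) ^ (1 - r) *
    (qpochInf (be * (q : ℂ) ^ (r - 1) / ga) q * qpochInf ((q : ℂ) ^ r / (de * x)) q /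
      qpochInf (al * be * (q : ℂ) ^ (2 * r - 2) / (ga * de)) q) *
    phi21 q (al * (q : ℂ) ^ (r - 1) / de) ((q : ℂ) / (be * x)) ((q : ℂ) ^ r / (de * x))
      (be * (q : ℂ) ^ (r - 1) / ga)

/-- the constant 𝔥_r. -/
def scrH (q zm zp : ℝ) (al be ga de : ℂ) (r : ℤ) : ℂ :=
  (zp : ℂ) * ((ga * de) ^ r / (al * be)) *
    ((q : ℂ) ^ (2 - r ^ 2) / ((q : ℂ) ^ (3 - 2 * r) * ga * de / (al * be) - 1)) *
    (thetaQ q ((zm : ℂ) / (zp : ℂ)) * thetaQ q (ga * de * (zm : ℂ) * (zp : ℂ)) /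
      (thetaQ q (ga * zm) * thetaQ q (de * zm) * thetaQ q (ga * zp) * thetaQ q (de * zp))) *
    (qpochInf (q : ℂ) q ^ 2 * qpochInf (al * (q : ℂ) ^ (r - 1) / de) q *
        qpochInf (al * (q : ℂ) ^ (r - 1) / ga) q * qpochInf (be * (q : ℂ) ^ (r - 1) / de) q *
        qpochInf (be * (q : ℂ) ^ (r - 1) / ga) q /
      qpochInf (al * be * (q : ℂ) ^ (2 * r - 2) / (ga * de)) q ^ 2)

/-- the closed-form expression for h₀(a,b,c,d) = Σ_{x∈Λ} w(x;a,b,c,d). -/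
def h0Closed (q zm zp : ℝ) (a b c d : ℂ) : ℂ :=
  (zp : ℂ) *
    (qpochInf (q : ℂ) q * qpochInf (a / c) q * qpochInf (a / d) q * qpochInf (b / c) q *
        qpochInf (b / d) q / qpochInf (a * b / ((q : ℂ) * c * d)) q) *
    (thetaQ q ((zm : ℂ) / (zp : ℂ)) * thetaQ q (c * d * (zm : ℂ) * (zp : ℂ)) /
      (thetaQ q (c * zm) * thetaQ q (d * zm) * thetaQ q (c * zp) * thetaQ q (d * zp)))

/-- the closed-form expression for the squared norm h_n(a,b,c,d). -/
def hClosed (q zm zp : ℝ) (a b c d : ℂ) (n : ℕ) : ℂ :=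
  h0Closed q zm zp a b c d *
    ((-1 : ℂ) ^ n * (c ^ 2 / (a * b)) ^ n * (q : ℂ) ^ (n * (n - 1) / 2) * (q : ℂ) ^ (2 * n) *
      (qpochC (q : ℂ) q n * qpochC ((q : ℂ) * d / a) q n * qpochC ((q : ℂ) * d / b) q n /
        (qpochC ((q : ℂ) * c * d / (a * b)) q n * qpochC ((q : ℂ) * c / a) q n *
          qpochC ((q : ℂ) * c / b) q n)) *
      ((1 - (q : ℂ) * c * d / (a * b)) / (1 - (q : ℂ) ^ (2 * n + 1) * c * d / (a * b))))

/-!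
Reversing the order of the factors of the finite q-Pochhammer symbols that carry `c` and `d` in the
numerator writes `h_n / k_n²` as a product of an explicit rational factor, the theta quotient of
`h₀`, the quotient `(q, au/c, au/d, bu/c, bu/d; q)_n / (abu²/(cd); q)_n²` at `u = q⁻ⁿ`, and a
correction that tends to `1` as `c, d, cdqⁿ → ∞`. Put `c = γq^{1-N}`, `d = δq^{1-N}` and
`n = N - r`. The q-Pochhammer quotient depends only on `u/c` and `u/d`, so it becomes the one at
`γ`, `δ`, `u = q^{r-1}` and converges as `n → ∞`. The theta quotient is quasi-periodic under
`(c, d) ↦ (c/q, d/q)`, so it contributes a power of `q`, and together with the rational factor this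
cancels `(γδ)^{N-1} q^{-N(N-1)}` up to a constant.
-/

open Filter Topology

section QPochhammer

variable {q : ℝ}

lemma hasSum_norm_mul_pow (hq : |q| < 1) (x : ℂ) :
    HasSum (fun m : ℕ => ‖-(x * (q : ℂ) ^ m)‖) (‖x‖ * (1 - |q|)⁻¹) := by
  simpa only [norm_neg, norm_mul, norm_pow, Complex.norm_real, Real.norm_eq_abs] using
    (hasSum_geometric_of_lt_one (abs_nonneg q) hq).mul_left ‖x‖

lemma tendsto_qpochC_qpochInf (hq : |q| < 1) (x : ℂ) :
    Tendsto (qpochC x q) atTop (𝓝 (qpochInf x q)) := by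
  have hmul : Multipliable fun m : ℕ => 1 - x * (q : ℂ) ^ m := by
    simpa only [sub_eq_add_neg] using
      multipliable_one_add_of_summable (hasSum_norm_mul_pow hq x).summable
  exact hmul.tendsto_prod_tprod_nat

lemma exists_eq_zero_of_qpochInf_eq_zero (hq : |q| < 1) {x : ℂ} (hx : qpochInf x q = 0) :
    ∃ m : ℕ, 1 - x * (q : ℂ) ^ m = 0 := by
  by_contra! hne
  refine tprod_one_add_ne_zero_of_summable (f := fun m : ℕ => -(x * (q : ℂ) ^ m)) ?_
    (hasSum_norm_mul_pow hq x).summable ?_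
  · simpa only [← sub_eq_add_neg] using hne
  · simpa only [qpochInf, ← sub_eq_add_neg] using hx

-- If the limit is `0`, some factor vanishes and both sides are eventually `0⁻¹ = 0`.
lemma tendsto_inv_qpochC (hq : |q| < 1) (x : ℂ) :
    Tendsto (fun n => (qpochC x q n)⁻¹) atTop (𝓝 (qpochInf x q)⁻¹) := by
  by_cases hx : qpochInf x q = 0
  · obtain ⟨m, hm⟩ := exists_eq_zero_of_qpochInf_eq_zero hq hx
    refine tendsto_const_nhds.congr' ?_
    filter_upwards [eventually_gt_atTop m] with n hn
    rw [hx, qpochC, Finset.prod_eq_zero (Finset.mem_range.2 hn) hm]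
  · exact (tendsto_qpochC_qpochInf hq x).inv₀ hx

lemma norm_qpochC_sub_one_le (hq : |q| < 1) (x : ℂ) (n : ℕ) :
    ‖qpochC x q n - 1‖ ≤ Real.exp (‖x‖ * (1 - |q|)⁻¹) - 1 := by
  have hprod := Finset.norm_prod_one_add_sub_one_le (Finset.range n)
    fun m : ℕ => -(x * (q : ℂ) ^ m)
  have hsum := sum_le_hasSum (Finset.range n) (fun _ _ => norm_nonneg _) (hasSum_norm_mul_pow hq x)
  simp only [← sub_eq_add_neg] at hprod
  exact hprod.trans (sub_le_sub_right (Real.exp_le_exp.2 hsum) 1)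

lemma norm_qpochInf_sub_one_le (hq : |q| < 1) (x : ℂ) :
    ‖qpochInf x q - 1‖ ≤ Real.exp (‖x‖ * (1 - |q|)⁻¹) - 1 :=
  le_of_tendsto ((tendsto_qpochC_qpochInf hq x).sub_const 1).norm
    (Eventually.of_forall (norm_qpochC_sub_one_le hq x))

variable {ι : Type*} {l : Filter ι} {x : ι → ℂ}

lemma tendsto_exp_norm_mul_sub_one (hx : Tendsto x l (𝓝 0)) (C : ℝ) :
    Tendsto (fun i => Real.exp (‖x i‖ * C) - 1) l (𝓝 0) := by
  have h := (Real.continuous_exp.tendsto _).comp (hx.norm.mul_const C)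
  simpa using h.sub_const 1

lemma tendsto_qpochC_one (hq : |q| < 1) (hx : Tendsto x l (𝓝 0)) (n : ι → ℕ) :
    Tendsto (fun i => qpochC (x i) q (n i)) l (𝓝 1) :=
  tendsto_iff_norm_sub_tendsto_zero.2 <| squeeze_zero (fun _ => norm_nonneg _)
    (fun i => norm_qpochC_sub_one_le hq (x i) (n i)) (tendsto_exp_norm_mul_sub_one hx _)

lemma tendsto_qpochInf_one (hq : |q| < 1) (hx : Tendsto x l (𝓝 0)) :
    Tendsto (fun i => qpochInf (x i) q) l (𝓝 1) :=
  tendsto_iff_norm_sub_tendsto_zero.2 <| squeeze_zero (fun _ => norm_nonneg _)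
    (fun i => norm_qpochInf_sub_one_le hq (x i)) (tendsto_exp_norm_mul_sub_one hx _)

lemma qpochC_succ' (x : ℂ) (q : ℝ) (n : ℕ) :
    qpochC x q (n + 1) = (1 - x) * qpochC (x * q) q n := by
  simp only [qpochC, Finset.prod_range_succ', pow_zero, mul_one, pow_succ', mul_assoc, mul_comm]

lemma qpochInf_eq_one_sub_mul (hq : |q| < 1) (x : ℂ) :
    qpochInf x q = (1 - x) * qpochInf (x * q) q := by
  refine tendsto_nhds_unique ((tendsto_qpochC_qpochInf hq x).comp (tendsto_add_atTop_nat 1)) ?_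
  simpa only [Function.comp_def, qpochC_succ'] using
    (tendsto_qpochC_qpochInf hq (x * q)).const_mul (1 - x)

lemma qpochC_reverse (hq0 : q ≠ 0) {x y : ℂ} {n : ℕ} (hxy : x * y * (q : ℂ) ^ n = q) :
    qpochC x q n = (-x) ^ n * (q : ℂ) ^ (n * (n - 1) / 2) * qpochC y q n := by
  have hQ : (q : ℂ) ≠ 0 := Complex.ofReal_ne_zero.2 hq0
  have hconst : (-x) ^ n = ∏ _m ∈ Finset.range n, -x := by simp
  rw [qpochC, qpochC, hconst, ← Finset.prod_range_reflect (fun m => 1 - y * (q : ℂ) ^ m),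
    ← Finset.sum_range_id, ← Finset.prod_pow_eq_pow_sum, ← Finset.prod_mul_distrib,
    ← Finset.prod_mul_distrib]
  refine Finset.prod_congr rfl fun m hm => ?_
  obtain ⟨k, rfl⟩ := Nat.exists_eq_add_of_lt (Finset.mem_range.1 hm)
  have hone : x * (q : ℂ) ^ m * (y * (q : ℂ) ^ k) = 1 := by
    apply mul_right_cancel₀ hQ
    rw [pow_succ, pow_add] at hxy
    linear_combination hxy
  rw [show m + k + 1 - 1 - m = k by lia]
  linear_combination -hone

end QPochhammer

section Theta

variable {q : ℝ}

lemma thetaQ_div_self (hq0 : q ≠ 0) (hq : |q| < 1) {u : ℂ} (hu : u ≠ 0) :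
    thetaQ q (u / q) = -(u / q) * thetaQ q u := by
  have hQ : (q : ℂ) ≠ 0 := Complex.ofReal_ne_zero.2 hq0
  have hfirst : qpochInf (u / q) q = (1 - u / q) * qpochInf u q := by
    rw [qpochInf_eq_one_sub_mul hq, div_mul_cancel₀ u hQ]
  have hsecond : qpochInf (q / u) q = (1 - q / u) * qpochInf (q / (u / q)) q := by
    rw [qpochInf_eq_one_sub_mul hq, div_div_eq_mul_div, mul_div_right_comm]
  rw [thetaQ, thetaQ, hfirst, hsecond]
  field_simp
  ring

/-- The part `θ_q(cd ζ₋ζ₊) / (θ_q(cζ₋) θ_q(dζ₋) θ_q(cζ₊) θ_q(dζ₊))` of `h₀(a,b,c,d)` that depends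
on `c` and `d` through theta functions. -/
def thetaFactor (q zm zp : ℝ) (c d : ℂ) : ℂ :=
  thetaQ q (c * d * zm * zp) /
    (thetaQ q (c * zm) * thetaQ q (d * zm) * thetaQ q (c * zp) * thetaQ q (d * zp))

variable {zm zp : ℝ} {c d : ℂ}

lemma thetaFactor_div_self (hq0 : q ≠ 0) (hq : |q| < 1) (hzm : zm ≠ 0) (hzp : zp ≠ 0)
    (hc : c ≠ 0) (hd : d ≠ 0) :
    thetaFactor q zm zp (c / q) (d / q) = q * thetaFactor q zm zp c d := by
  have hQ : (q : ℂ) ≠ 0 := Complex.ofReal_ne_zero.2 hq0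
  have hm : (zm : ℂ) ≠ 0 := Complex.ofReal_ne_zero.2 hzm
  have hp : (zp : ℂ) ≠ 0 := Complex.ofReal_ne_zero.2 hzp
  have hnum : thetaQ q (c / q * (d / q) * zm * zp) =
      (c * d * zm * zp) ^ 2 / (q : ℂ) ^ 3 * thetaQ q (c * d * zm * zp) := by
    rw [show c / q * (d / q) * zm * zp = c * d * zm * zp / q / q by field_simp,
      thetaQ_div_self hq0 hq (by positivity), thetaQ_div_self hq0 hq (by positivity)]
    field_simp
  have hden {e : ℂ} {z : ℝ} (he : e ≠ 0) (hz : (z : ℂ) ≠ 0) :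
      thetaQ q (e / q * z) = -(e * z / q) * thetaQ q (e * z) := by
    rw [div_mul_eq_mul_div, thetaQ_div_self hq0 hq (mul_ne_zero he hz)]
  rw [thetaFactor, thetaFactor, hnum, hden hc hm, hden hd hm, hden hc hp, hden hd hp]
  rw [show -(c * zm / q) * thetaQ q (c * zm) * (-(d * zm / q) * thetaQ q (d * zm)) *
      (-(c * zp / q) * thetaQ q (c * zp)) * (-(d * zp / q) * thetaQ q (d * zp)) =
      (c * d * zm * zp) ^ 2 / (q : ℂ) ^ 4 * (thetaQ q (c * zm) * thetaQ q (d * zm) *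
        thetaQ q (c * zp) * thetaQ q (d * zp)) by ring, mul_div_mul_comm]
  congr 1
  field_simp

lemma thetaFactor_mul_zpow (hq0 : q ≠ 0) (hq : |q| < 1) (hzm : zm ≠ 0) (hzp : zp ≠ 0)
    (hc : c ≠ 0) (hd : d ≠ 0) (k : ℤ) :
    thetaFactor q zm zp (c * (q : ℂ) ^ k) (d * (q : ℂ) ^ k) =
      ((q : ℂ) ^ k)⁻¹ * thetaFactor q zm zp c d := by
  have hQ : (q : ℂ) ≠ 0 := Complex.ofReal_ne_zero.2 hq0
  have hstep (k : ℤ) : thetaFactor q zm zp (c * (q : ℂ) ^ k) (d * (q : ℂ) ^ k) =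
      q * thetaFactor q zm zp (c * (q : ℂ) ^ (k + 1)) (d * (q : ℂ) ^ (k + 1)) := by
    rw [← thetaFactor_div_self hq0 hq hzm hzp (by positivity) (by positivity), zpow_add_one₀ hQ]
    simp only [← mul_assoc, mul_div_cancel_right₀ _ hQ]
  induction k with
  | zero => simp
  | succ k ih =>
    rw [hstep] at ih
    apply mul_left_cancel₀ hQ
    rw [ih, zpow_add_one₀ hQ]
    field_simp
  | pred k ih =>
    rw [hstep, sub_add_cancel, ih, zpow_sub_one₀ hQ]
    field_simp

end Theta

section NormRatio

variable {q : ℝ}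

/-- The quotient `(q, au/c, au/d, bu/c, bu/d; q)_n / (abu²/(cd); q)_n²` occurring in `h_n / k_n²`,
with a free rescaling `u` of `1/c` and `1/d`. -/
def qpochQuot (q : ℝ) (a b c d u : ℂ) (n : ℕ) : ℂ :=
  qpochC q q n * qpochC (a * u / d) q n * qpochC (a * u / c) q n * qpochC (b * u / d) q n *
    qpochC (b * u / c) q n / qpochC (a * b * u ^ 2 / (c * d)) q n ^ 2

/-- The limit of `qpochQuot` as `n → ∞`. -/
def qpochQuotInf (q : ℝ) (a b c d u : ℂ) : ℂ :=
  qpochInf q q * qpochInf (a * u / d) q * qpochInf (a * u / c) q * qpochInf (b * u / d) q *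
    qpochInf (b * u / c) q / qpochInf (a * b * u ^ 2 / (c * d)) q ^ 2

/-- The factor of `h_n / k_n²` that tends to `1` as `c, d, cdqⁿ → ∞`. -/
def normCorrection (q : ℝ) (a b c d : ℂ) (n : ℕ) : ℂ :=
  qpochInf (a / c) q * qpochInf (a / d) q * qpochInf (b / c) q * qpochInf (b / d) q *
      (1 - a * b / (q * c * d)) /
    (qpochInf (a * b / (q * c * d)) q * qpochC (a * b / (c * d * (q : ℂ) ^ n)) q n)

lemma qpochQuot_mul_right (q : ℝ) (a b c d u : ℂ) (n : ℕ) {s : ℂ} (hs : s ≠ 0) :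
    qpochQuot q a b (c * s) (d * s) (u * s) n = qpochQuot q a b c d u n := by
  have hlin (e f : ℂ) : e * (u * s) / (f * s) = e * u / f := by
    rw [← mul_assoc, mul_div_mul_right _ _ hs]
  have hsq : a * b * (u * s) ^ 2 / (c * s * (d * s)) = a * b * u ^ 2 / (c * d) := by
    rw [show a * b * (u * s) ^ 2 = a * b * u ^ 2 * s ^ 2 by ring,
      show c * s * (d * s) = c * d * s ^ 2 by ring, mul_div_mul_right _ _ (pow_ne_zero 2 hs)]
  simp only [qpochQuot, hlin, hsq]

lemma tendsto_qpochQuot (hq : |q| < 1) (a b c d u : ℂ) :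
    Tendsto (fun n => qpochQuot q a b c d u n) atTop (𝓝 (qpochQuotInf q a b c d u)) := by
  have h (x : ℂ) := tendsto_qpochC_qpochInf hq x
  simpa only [qpochQuot, qpochQuotInf, Function.comp_def, inv_pow, ← div_eq_mul_inv] using
    (((((h q).mul (h (a * u / d))).mul (h (a * u / c))).mul (h (b * u / d))).mul
      (h (b * u / c))).mul ((tendsto_inv_qpochC hq (a * b * u ^ 2 / (c * d))).pow 2)

lemma tendsto_normCorrection (hq : |q| < 1) (a b : ℂ) {ι : Type*} {l : Filter ι} {c d : ι → ℂ}
    {n : ι → ℕ} (hc : Tendsto (fun i => (c i)⁻¹) l (𝓝 0))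
    (hd : Tendsto (fun i => (d i)⁻¹) l (𝓝 0))
    (hcd : Tendsto (fun i => (c i * d i * (q : ℂ) ^ n i)⁻¹) l (𝓝 0)) :
    Tendsto (fun i => normCorrection q a b (c i) (d i) (n i)) l (𝓝 1) := by
  have hdiv (e : ℂ) {f : ι → ℂ} (hf : Tendsto (fun i => (f i)⁻¹) l (𝓝 0)) :
      Tendsto (fun i => e / f i) l (𝓝 0) := by
    simpa only [div_eq_mul_inv, mul_zero] using hf.const_mul e
  have hinv : Tendsto (fun i => (q * c i * d i)⁻¹) l (𝓝 0) := by
    simpa only [mul_inv, mul_zero] using (hc.const_mul (q : ℂ)⁻¹).mul hd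
  have hone (e : ℂ) {f : ι → ℂ} (hf : Tendsto (fun i => (f i)⁻¹) l (𝓝 0)) :=
    tendsto_qpochInf_one hq (hdiv e hf)
  simpa only [normCorrection, Pi.div_def, mul_one, sub_zero, div_one] using
    (((((hone a hc).mul (hone a hd)).mul (hone b hc)).mul (hone b hd)).mul
      ((hdiv (a * b) hinv).const_sub 1)).div
      ((hone (a * b) hinv).mul (tendsto_qpochC_one hq (hdiv (a * b) hcd) n))
      (mul_ne_zero one_ne_zero one_ne_zero)

lemma sq_pow_triangle {x : ℂ} (hx : x ≠ 0) (n : ℕ) :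
    (x ^ (n * (n - 1) / 2)) ^ 2 = (x ^ n / x) ^ n := by
  rw [← pow_mul, Nat.div_mul_cancel (Nat.even_mul_pred_self n).two_dvd, pow_mul, pow_right_comm]
  cases n with
  | zero => simp
  | succ n => rw [Nat.add_sub_cancel, pow_succ x n, mul_div_cancel_right₀ _ hx]

lemma h0Closed_mul_eq_normCorrection (hq0 : q ≠ 0) (zm zp : ℝ) {a b c d : ℂ} (ha : a ≠ 0)
    (hb : b ≠ 0) (hc : c ≠ 0) (hd : d ≠ 0) (n : ℕ) :
    h0Closed q zm zp a b c d * (1 - q * c * d / (a * b)) /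
        qpochC (a * b / (c * d * (q : ℂ) ^ n)) q n =
      zp * thetaQ q (zm / zp) * qpochInf q q * thetaFactor q zm zp c d *
        -(q * c * d / (a * b)) * normCorrection q a b c d n := by
  have hQ : (q : ℂ) ≠ 0 := Complex.ofReal_ne_zero.2 hq0
  have hfactor : 1 - q * c * d / (a * b) = -(q * c * d / (a * b)) * (1 - a * b / (q * c * d)) := by
    field_simp
    ring
  rw [hfactor, h0Closed, normCorrection, thetaFactor]
  simp only [div_eq_mul_inv, mul_inv]
  ring

lemma hClosed_div_kCoeff_sq_eq_qpochC (q zm zp : ℝ) (a b : ℂ) {c : ℂ} (hc : c ≠ 0) (d : ℂ)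
    (n : ℕ) :
    hClosed q zm zp a b c d n / kCoeff q a b c d n ^ 2 =
      h0Closed q zm zp a b c d *
        ((1 - q * c * d / (a * b)) / (1 - (q : ℂ) ^ (2 * n + 1) * c * d / (a * b))) *
        ((-(q ^ 2 / (a * b))) ^ n * (q : ℂ) ^ (n * (n - 1) / 2)) *
        (qpochC q q n * qpochC (q * d / a) q n * qpochC (q * d / b) q n * qpochC (q * c / a) q n *
            qpochC (q * c / b) q n /
          (qpochC (q * c * d / (a * b)) q n *
            qpochC (c * d * (q : ℂ) ^ (n + 1) / (a * b)) q n ^ 2)) := by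
  have hexp : (q : ℂ) ^ ((n : ℤ) + 1) = (q : ℂ) ^ (n + 1) := by
    exact_mod_cast zpow_natCast (q : ℂ) (n + 1)
  have hcn : c ^ n ≠ 0 := pow_ne_zero n hc
  have hpow : (-1) ^ n * (c ^ 2 / (a * b)) ^ n * (q : ℂ) ^ (n * (n - 1) / 2) * (q : ℂ) ^ (2 * n) =
      (-(q ^ 2 / (a * b))) ^ n * (c ^ n) ^ 2 * (q : ℂ) ^ (n * (n - 1) / 2) := by
    rw [mul_right_comm, pow_mul, pow_right_comm c, ← mul_pow, ← mul_pow, ← mul_pow]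
    ring
  rw [hClosed, kCoeff, hexp, mul_comm c (q : ℂ), hpow]
  generalize qpochC (q * c / a) q n = A, qpochC (q * c / b) q n = B, c ^ n = C,
    h0Closed q zm zp a b c d = h, qpochC q q n = P₀, qpochC (q * d / a) q n = P₁,
    qpochC (q * d / b) q n = P₂, qpochC (q * c * d / (a * b)) q n = F,
    qpochC (c * d * (q : ℂ) ^ (n + 1) / (a * b)) q n = K, (-((q : ℂ) ^ 2 / (a * b))) ^ n = s,
    (1 - q * c * d / (a * b)) / (1 - (q : ℂ) ^ (2 * n + 1) * c * d / (a * b)) = L at hcn ⊢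
  rcases eq_or_ne A 0 with rfl | hA
  · simp
  rcases eq_or_ne B 0 with rfl | hB
  · simp
  field_simp

lemma reversal_monomial_eq {a b c d x : ℂ} (hx : x ≠ 0) (ha : a ≠ 0) (hb : b ≠ 0) (hc : c ≠ 0)
    (hd : d ≠ 0) (n : ℕ) :
    (-(x ^ 2 / (a * b))) ^ n * x ^ (n * (n - 1) / 2) *
      ((-(x * d / a)) ^ n * x ^ (n * (n - 1) / 2) * ((-(x * d / b)) ^ n * x ^ (n * (n - 1) / 2)) *
        ((-(x * c / a)) ^ n * x ^ (n * (n - 1) / 2)) *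
        ((-(x * c / b)) ^ n * x ^ (n * (n - 1) / 2)) /
        ((-(x * c * d / (a * b))) ^ n * x ^ (n * (n - 1) / 2) *
          ((-(c * d * x ^ (n + 1) / (a * b))) ^ n * x ^ (n * (n - 1) / 2)) ^ 2)) =
      (x ^ 2 / (c * d * x ^ n)) ^ n := by
  have hW := sq_pow_triangle hx n
  have hW0 : x ^ (n * (n - 1) / 2) ≠ 0 := pow_ne_zero _ hx
  generalize x ^ (n * (n - 1) / 2) = W at hW hW0 ⊢
  calc
    _ = (-(x ^ 2 / (a * b)) * -(x * d / a) * -(x * d / b) * -(x * c / a) * -(x * c / b) /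
          (-(x * c * d / (a * b)) * (-(c * d * x ^ (n + 1) / (a * b))) ^ 2)) ^ n * W ^ 2 := by
      have hW3 : W ^ 5 * (W ^ 3)⁻¹ = W ^ 2 := by field_simp
      rw [← hW3, div_pow, mul_pow _ _ n, mul_pow _ _ n, mul_pow _ _ n, mul_pow _ _ n,
        mul_pow _ _ n, pow_right_comm _ 2 n]
      simp only [div_eq_mul_inv, mul_inv]
      ring
    _ = _ := by
      rw [hW, ← mul_pow, pow_succ]
      congr 1
      field_simp
      ring

lemma hClosed_div_kCoeff_sq_eq_qpochQuot (hq0 : q ≠ 0) (zm zp : ℝ) {a b c d : ℂ} (ha : a ≠ 0)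
    (hb : b ≠ 0) (hc : c ≠ 0) (hd : d ≠ 0) (n : ℕ) :
    hClosed q zm zp a b c d n / kCoeff q a b c d n ^ 2 =
      h0Closed q zm zp a b c d *
        ((1 - q * c * d / (a * b)) / (1 - (q : ℂ) ^ (2 * n + 1) * c * d / (a * b))) *
        ((q : ℂ) ^ 2 / (c * d * (q : ℂ) ^ n)) ^ n *
        (qpochQuot q a b c d ((q : ℂ) ^ n)⁻¹ n / qpochC (a * b / (c * d * (q : ℂ) ^ n)) q n) := by
  have hQ : (q : ℂ) ≠ 0 := Complex.ofReal_ne_zero.2 hq0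
  have hX : (q : ℂ) ^ n ≠ 0 := pow_ne_zero n hQ
  have hrev (e f : ℂ) (he : e ≠ 0) (hf : f ≠ 0) : qpochC (q * f / e) q n =
      (-(q * f / e)) ^ n * (q : ℂ) ^ (n * (n - 1) / 2) * qpochC (e * ((q : ℂ) ^ n)⁻¹ / f) q n :=
    qpochC_reverse hq0 (by field_simp)
  have hrev₁ : qpochC (q * c * d / (a * b)) q n = (-(q * c * d / (a * b))) ^ n *
      (q : ℂ) ^ (n * (n - 1) / 2) * qpochC (a * b / (c * d * (q : ℂ) ^ n)) q n :=
    qpochC_reverse hq0 (by field_simp)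
  have hrev₂ : qpochC (c * d * (q : ℂ) ^ (n + 1) / (a * b)) q n =
      (-(c * d * (q : ℂ) ^ (n + 1) / (a * b))) ^ n * (q : ℂ) ^ (n * (n - 1) / 2) *
        qpochC (a * b * ((q : ℂ) ^ n)⁻¹ ^ 2 / (c * d)) q n :=
    qpochC_reverse hq0 (by field_simp; ring)
  rw [hClosed_div_kCoeff_sq_eq_qpochC q zm zp a b hc d n, hrev₁, hrev₂, hrev a d ha hd,
    hrev b d hb hd, hrev a c ha hc, hrev b c hb hc,
    ← reversal_monomial_eq hQ ha hb hc hd n, qpochQuot]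
  simp only [div_eq_mul_inv, mul_inv, mul_pow]
  ring

lemma hClosed_div_kCoeff_sq (hq0 : q ≠ 0) (zm zp : ℝ) {a b c d : ℂ} (ha : a ≠ 0) (hb : b ≠ 0)
    (hc : c ≠ 0) (hd : d ≠ 0) (n : ℕ) :
    hClosed q zm zp a b c d n / kCoeff q a b c d n ^ 2 =
      zp * thetaQ q (zm / zp) * qpochInf q q * thetaFactor q zm zp c d *
        ((q : ℂ) ^ 2 / (c * d * (q : ℂ) ^ n)) ^ n *
        (-(q * c * d / (a * b)) / (1 - (q : ℂ) ^ (2 * n + 1) * c * d / (a * b))) *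
        qpochQuot q a b c d ((q : ℂ) ^ n)⁻¹ n * normCorrection q a b c d n := by
  rw [hClosed_div_kCoeff_sq_eq_qpochQuot hq0 zm zp ha hb hc hd n]
  linear_combination (((q : ℂ) ^ 2 / (c * d * (q : ℂ) ^ n)) ^ n *
    qpochQuot q a b c d ((q : ℂ) ^ n)⁻¹ n / (1 - (q : ℂ) ^ (2 * n + 1) * c * d / (a * b))) *
    h0Closed_mul_eq_normCorrection hq0 zm zp ha hb hc hd n

end NormRatio

section Asymptotics

variable {q zm zp : ℝ} {al be ga de : ℂ} {r : ℤ}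

/-- The constant `𝔥_r` without its q-Pochhammer quotient. -/
def normConst (q zm zp : ℝ) (al be ga de : ℂ) (r : ℤ) : ℂ :=
  zp * thetaQ q (zm / zp) * qpochInf q q * thetaFactor q zm zp ga de *
    ((ga * de) ^ r / (al * be) *
      ((q : ℂ) ^ (2 - r ^ 2) / ((q : ℂ) ^ (3 - 2 * r) * ga * de / (al * be) - 1)))

lemma scrH_eq_normConst_mul (q zm zp : ℝ) (al be ga de : ℂ) (r : ℤ) :
    scrH q zm zp al be ga de r =
      normConst q zm zp al be ga de r * qpochQuotInf q al be ga de ((q : ℂ) ^ (r - 1)) := by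
  have hsq : ((q : ℂ) ^ (r - 1)) ^ 2 = (q : ℂ) ^ (2 * r - 2) := by
    rw [← zpow_natCast, ← zpow_mul]
    congr 1
    push_cast
    ring
  rw [scrH, normConst, qpochQuotInf, thetaFactor, hsq]
  ring

lemma rescaling_monomial_eq {g x : ℂ} (hg : g ≠ 0) (hx : x ≠ 0) {N n : ℕ} (hN : 1 ≤ N)
    (hn : (n : ℤ) = N - r) :
    g ^ (N - 1) / x ^ (N * (N - 1)) *
        (x ^ 2 / (g * (x ^ (1 - (N : ℤ))) ^ 2 * x ^ n)) ^ n *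
        (x * g * (x ^ (1 - (N : ℤ))) ^ 2) * (x ^ (1 - (N : ℤ)))⁻¹ =
      g ^ r * x ^ (2 - r ^ 2) := by
  have hs : x ^ (1 - (N : ℤ)) ≠ 0 := zpow_ne_zero _ hx
  have hbase : x ^ 2 / (g * (x ^ (1 - (N : ℤ))) ^ 2 * x ^ n) = x ^ ((N : ℤ) + r) / g := by
    have hexp : x ^ ((N : ℤ) + r) * ((x ^ (1 - (N : ℤ))) ^ 2 * x ^ n) = x ^ 2 := by
      simp only [← zpow_natCast, ← zpow_mul, ← zpow_add₀ hx]
      congr 1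
      push_cast
      lia
    rw [← hexp]
    field_simp
  have hgpow : g ^ (N - 1) * g = g ^ r * g ^ n := by
    rw [← pow_succ, ← zpow_natCast, ← zpow_natCast, ← zpow_add₀ hg]
    congr 1
    lia
  have hxpow : (x ^ ((N : ℤ) + r)) ^ n * x * x ^ (1 - (N : ℤ)) =
      x ^ (2 - r ^ 2) * x ^ (N * (N - 1)) := by
    rw [← zpow_natCast, ← zpow_natCast, ← zpow_mul, ← zpow_add_one₀ hx, ← zpow_add₀ hx,
      ← zpow_add₀ hx, hn]
    congr 1
    push_cast [hN]
    ring
  rw [hbase, div_pow]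
  field_simp
  linear_combination (g ^ r * g ^ n) * hxpow +
    (x ^ ((N : ℤ) + r)) ^ n * x * x ^ (1 - (N : ℤ)) * hgpow

lemma rescaled_norm_eq (hq0 : q ≠ 0) (hq : |q| < 1) (hzm : zm ≠ 0) (hzp : zp ≠ 0) (hal : al ≠ 0)
    (hbe : be ≠ 0) (hga : ga ≠ 0) (hde : de ≠ 0) {N n : ℕ} (hN : 1 ≤ N) (hn : (n : ℤ) = N - r) :
    (ga * de) ^ (N - 1) / (q : ℂ) ^ (N * (N - 1)) *
          hClosed q zm zp al be (ga * (q : ℂ) ^ (1 - (N : ℤ))) (de * (q : ℂ) ^ (1 - (N : ℤ))) n /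
        kCoeff q al be (ga * (q : ℂ) ^ (1 - (N : ℤ))) (de * (q : ℂ) ^ (1 - (N : ℤ))) n ^ 2 =
      normConst q zm zp al be ga de r * qpochQuot q al be ga de ((q : ℂ) ^ (r - 1)) n *
        normCorrection q al be (ga * (q : ℂ) ^ (1 - (N : ℤ))) (de * (q : ℂ) ^ (1 - (N : ℤ))) n := by
  have hQ : (q : ℂ) ≠ 0 := Complex.ofReal_ne_zero.2 hq0
  have hs : (q : ℂ) ^ (1 - (N : ℤ)) ≠ 0 := zpow_ne_zero _ hQ
  have hquot : ((q : ℂ) ^ n)⁻¹ = (q : ℂ) ^ (r - 1) * (q : ℂ) ^ (1 - (N : ℤ)) := by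
    rw [← zpow_natCast, ← zpow_neg, ← zpow_add₀ hQ]
    congr 1
    lia
  have hlast : (q : ℂ) ^ (2 * n + 1) * ((q : ℂ) ^ (1 - (N : ℤ))) ^ 2 = (q : ℂ) ^ (3 - 2 * r) := by
    rw [← zpow_natCast, ← zpow_natCast, ← zpow_mul, ← zpow_add₀ hQ]
    congr 1
    push_cast
    lia
  have hmonomial := rescaling_monomial_eq (mul_ne_zero hga hde) hQ hN hn
  rw [mul_div_assoc, hClosed_div_kCoeff_sq hq0 zm zp hal hbe (mul_ne_zero hga hs)
    (mul_ne_zero hde hs), thetaFactor_mul_zpow hq0 hq hzm hzp hga hde, hquot,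
    qpochQuot_mul_right _ _ _ _ _ _ _ hs, normConst]
  generalize (q : ℂ) ^ (1 - (N : ℤ)) = s at *
  have hcd : ga * s * (de * s) = ga * de * s ^ 2 := by ring
  have hpole : 1 - (q : ℂ) ^ (2 * n + 1) * (ga * s) * (de * s) / (al * be) =
      -((q : ℂ) ^ (3 - 2 * r) * ga * de / (al * be) - 1) := by
    rw [← hlast]
    ring
  rw [hcd, hpole, neg_div_neg_eq]
  linear_combination (zp * thetaQ q (zm / zp) * qpochInf q q * thetaFactor q zm zp ga de /
    (al * be) / ((q : ℂ) ^ (3 - 2 * r) * ga * de / (al * be) - 1) *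
    qpochQuot q al be ga de ((q : ℂ) ^ (r - 1)) n *
    normCorrection q al be (ga * s) (de * s) n) * hmonomial

lemma tendsto_natCast_sub_toNat_atTop (r : ℤ) :
    Tendsto (fun N : ℕ => ((N : ℤ) - r).toNat) atTop atTop := by
  refine tendsto_atTop.2 fun b => ?_
  filter_upwards [eventually_ge_atTop (b + r.toNat)] with N hN
  lia

lemma tendsto_zpow_natCast_add_zero (hq0 : q ≠ 0) (hq : |q| < 1) (k : ℤ) :
    Tendsto (fun N : ℕ => (q : ℂ) ^ ((N : ℤ) + k)) atTop (𝓝 0) := by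
  have hnorm : ‖(q : ℂ)‖ < 1 := by rwa [Complex.norm_real, Real.norm_eq_abs]
  simpa only [zpow_add₀ (Complex.ofReal_ne_zero.2 hq0), zpow_natCast, zero_mul] using
    (tendsto_pow_atTop_nhds_zero_of_norm_lt_one hnorm).mul_const ((q : ℂ) ^ k)

lemma tendsto_rescaled_normCorrection (hq0 : q ≠ 0) (hq : |q| < 1) (a b c d : ℂ) (r : ℤ) :
    Tendsto (fun N : ℕ => normCorrection q a b (c * (q : ℂ) ^ (1 - (N : ℤ)))
      (d * (q : ℂ) ^ (1 - (N : ℤ))) ((N : ℤ) - r).toNat) atTop (𝓝 1) := by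
  have hQ : (q : ℂ) ≠ 0 := Complex.ofReal_ne_zero.2 hq0
  have hinv (e : ℂ) : Tendsto (fun N : ℕ => (e * (q : ℂ) ^ (1 - (N : ℤ)))⁻¹) atTop (𝓝 0) := by
    have hexp (N : ℕ) : -(1 - (N : ℤ)) = N + -1 := by ring
    simpa only [mul_inv, ← zpow_neg, hexp, mul_zero] using
      (tendsto_zpow_natCast_add_zero hq0 hq (-1)).const_mul e⁻¹
  refine tendsto_normCorrection hq a b (hinv c) (hinv d) ?_
  have hlim := (tendsto_zpow_natCast_add_zero hq0 hq (r - 2)).const_mul (c * d)⁻¹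
  rw [mul_zero] at hlim
  refine hlim.congr' ?_
  filter_upwards [eventually_ge_atTop r.toNat] with N hN
  have hexp : (q : ℂ) ^ ((N : ℤ) + (r - 2)) = ((q : ℂ) ^ (1 - (N : ℤ)) * (q : ℂ) ^ (1 - (N : ℤ)) *
      (q : ℂ) ^ ((N : ℤ) - r).toNat)⁻¹ := by
    rw [← zpow_natCast, ← zpow_add₀ hQ, ← zpow_add₀ hQ, ← zpow_neg]
    congr 1
    lia
  rw [hexp, ← mul_inv]
  ring

-- Where a denominator in `𝔥_r` vanishes, `x / 0 = 0` makes both `𝔥_r` and, eventually, the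
-- sequence equal to `0`.
theorem norm_asymptotics_general (hq0 : q ≠ 0) (hq : |q| < 1) (hzm : zm ≠ 0) (hzp : zp ≠ 0)
    (hal : al ≠ 0) (hbe : be ≠ 0) (hga : ga ≠ 0) (hde : de ≠ 0) (r : ℤ) :
    Tendsto
      (fun N : ℕ =>
        (ga * de) ^ (N - 1) / (q : ℂ) ^ (N * (N - 1)) *
          hClosed q zm zp al be (ga * (q : ℂ) ^ (1 - (N : ℤ))) (de * (q : ℂ) ^ (1 - (N : ℤ)))
            (((N : ℤ) - r).toNat) /
          kCoeff q al be (ga * (q : ℂ) ^ (1 - (N : ℤ))) (de * (q : ℂ) ^ (1 - (N : ℤ)))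
            (((N : ℤ) - r).toNat) ^ 2)
      atTop (𝓝 (scrH q zm zp al be ga de r)) := by
  have hquot := ((tendsto_qpochQuot hq al be ga de ((q : ℂ) ^ (r - 1))).comp
    (tendsto_natCast_sub_toNat_atTop r)).const_mul (normConst q zm zp al be ga de r)
  have hlim := hquot.mul (tendsto_rescaled_normCorrection hq0 hq al be ga de r)
  rw [mul_one, ← scrH_eq_normConst_mul] at hlim
  refine hlim.congr' ?_
  filter_upwards [eventually_ge_atTop 1, eventually_ge_atTop r.toNat] with N hN hr
  exact (rescaled_norm_eq hq0 hq hzm hzp hal hbe hga hde hN (by lia)).symm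

end Asymptotics

/-- Proposition 5.6: for an admissible nondegenerate quadruple and r ∈ ℤ,
h_{N−r}(α,β,γq^{1−N},δq^{1−N}) / k_{N−r}(α,β,γq^{1−N},δq^{1−N})²
is asymptotically q^{N(N−1)}(γδ)^{1−N} 𝔥_r, i.e.
(γδ)^{N−1} q^{−N(N−1)} h_{N−r}/k_{N−r}² → 𝔥_r as N → ∞. -/
theorem norm_asymptotics (q zm zp : ℝ) (hq0 : 0 < q) (hq1 : q < 1) (hzm : zm < 0)
    (hzp : 0 < zp) (al be ga de : ℂ) (hadm : AdmissibleNondeg q zm zp al be ga de)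
    (r : ℤ) :
    Filter.Tendsto
      (fun N : ℕ =>
        (ga * de) ^ (N - 1) / (q : ℂ) ^ (N * (N - 1)) *
          hClosed q zm zp al be (ga * (q : ℂ) ^ (1 - (N : ℤ))) (de * (q : ℂ) ^ (1 - (N : ℤ)))
            (((N : ℤ) - r).toNat) /
          kCoeff q al be (ga * (q : ℂ) ^ (1 - (N : ℤ))) (de * (q : ℂ) ^ (1 - (N : ℤ)))
            (((N : ℤ) - r).toNat) ^ 2)
      Filter.atTop (nhds (scrH q zm zp al be ga de r)) := by
  obtain ⟨⟨hal, hbe, -⟩, ⟨hga, hde, -⟩, -⟩ := hadm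
  exact norm_asymptotics_general hq0.ne' (by rwa [abs_of_pos hq0]) hzm.ne hzp.ne' hal hbe hga hde r

end
end

section
/- Let (a,b) and (c,d) be admissible pairs. Then for each ζ ∈ {ζ₋, ζ₊}, lim_{n→∞} (cdq/(ab))^n · w(ζ q^{−n}; a,b,c,d) = |ζ| · θ_q(aζ) θ_q(bζ) / (θ_q(cζ) θ_q(dζ)); in particular, w(x; a,b,c,d) is asymptotically equivalent to a positive constant times (ab/(cdq))^n along x = ζ q^{−n} as n → +∞. -/
open scoped BigOperators
open Classical

noncomputable section

/-!
Splitting the product `(u q⁻ⁿ; q)_∞` after its first `n` factors and reversing the order of those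
factors gives `(u q⁻ⁿ; q)_∞ = (-u)ⁿ q^(-n(n+1)/2) (u; q)_∞ (q/u; q)_n`, where the last two factors
converge to `θ_q(u)`. In the weight the growth factors for `u = aζ, bζ` are divided by those for
`u = cζ, dζ`: the powers of `q` cancel, and what is left is `(ab/(cd))ⁿ`. Together with
`|ζ q⁻ⁿ| = |ζ| |q|⁻ⁿ` this is the asserted growth rate. Admissibility of `(c, d)` keeps `1/c` and
`1/d` off the lattice, so the limit of the denominator does not vanish.
-/

section Pochhammer

variable {q : ℝ}

lemma summable_norm_neg_mul_pow (hq : |q| < 1) (u : ℂ) :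
    Summable fun m : ℕ => ‖-(u * (q : ℂ) ^ m)‖ := by
  simpa only [norm_neg, norm_mul] using
    (summable_norm_geometric_of_norm_lt_one (r := (q : ℂ)) (by simpa using hq)).mul_left ‖u‖

lemma multipliable_one_sub_mul_pow (hq : |q| < 1) (u : ℂ) :
    Multipliable fun m : ℕ => 1 - u * (q : ℂ) ^ m := by
  simpa only [sub_eq_add_neg] using
    multipliable_one_add_of_summable (summable_norm_neg_mul_pow hq u)

lemma tendsto_qpochC (hq : |q| < 1) (u : ℂ) :
    Filter.Tendsto (qpochC u q) Filter.atTop (nhds (qpochInf u q)) :=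
  (multipliable_one_sub_mul_pow hq u).hasProd.tendsto_prod_nat

lemma qpochInf_ne_zero (hq : |q| < 1) {u : ℂ} (hu : ∀ m : ℕ, u * (q : ℂ) ^ m ≠ 1) :
    qpochInf u q ≠ 0 := by
  simpa only [qpochInf, sub_eq_add_neg] using
    tprod_one_add_ne_zero_of_summable (f := fun m : ℕ => -(u * (q : ℂ) ^ m))
      (fun m => by simpa only [← sub_eq_add_neg] using sub_ne_zero.mpr (hu m).symm)
      (summable_norm_neg_mul_pow hq u)

lemma qpochC_mul_qpochInf_mul_pow (hq : |q| < 1) (u : ℂ) (n : ℕ) :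
    qpochC u q n * qpochInf (u * (q : ℂ) ^ n) q = qpochInf u q := by
  have shift (m : ℕ) : 1 - u * (q : ℂ) ^ (m + n) = 1 - u * (q : ℂ) ^ n * (q : ℂ) ^ m := by ring
  have tail : Multipliable fun m : ℕ => 1 - u * (q : ℂ) ^ (m + n) :=
    (multipliable_one_sub_mul_pow hq (u * (q : ℂ) ^ n)).congr fun m => (shift m).symm
  simpa only [qpochC, qpochInf, shift] using
    tail.prod_mul_tprod_nat_mul' (f := fun m : ℕ => 1 - u * (q : ℂ) ^ m)

lemma qpochC_mul_zpow_neg (hq0 : q ≠ 0) {u : ℂ} (hu : u ≠ 0) (n : ℕ) :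
    qpochC (u * (q : ℂ) ^ (-(n : ℤ))) q n =
      (-u) ^ n / (q : ℂ) ^ (n + 1).choose 2 * qpochC ((q : ℂ) / u) q n := by
  have hqC : (q : ℂ) ≠ 0 := Complex.ofReal_ne_zero.mpr hq0
  have reversed_factor (j : ℕ) (hj : j ∈ Finset.range n) :
      1 - u * (q : ℂ) ^ (-(n : ℤ)) * (q : ℂ) ^ (n - 1 - j) =
        -u / (q : ℂ) ^ (j + 1) * (1 - (q : ℂ) / u * (q : ℂ) ^ j) := by
    have hn : n = (n - 1 - j) + (j + 1) := by grind
    generalize n - 1 - j = k at hn ⊢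
    subst hn
    rw [zpow_neg, zpow_natCast]
    field_simp
    ring
  have prod_pow : ∏ j ∈ Finset.range n, (q : ℂ) ^ (j + 1) = (q : ℂ) ^ (n + 1).choose 2 := by
    rw [Finset.prod_pow_eq_pow_sum, Nat.choose_two_right, ← Finset.sum_range_id,
      Finset.sum_range_succ', add_zero]
  rw [qpochC, ← Finset.prod_range_reflect, Finset.prod_congr rfl reversed_factor,
    Finset.prod_mul_distrib, Finset.prod_div_distrib, prod_pow, Finset.prod_const,
    Finset.card_range, qpochC]

end Pochhammer

section Theta

/-- The truncation `(u;q)_∞ (q/u;q)_n` of `θ_q(u)`, which is what remains of `(u q⁻ⁿ;q)_∞` once its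
growth factor is split off. Only the second factor is truncated. -/
def thetaQTrunc (q : ℝ) (u : ℂ) (n : ℕ) : ℂ := qpochInf u q * qpochC ((q : ℂ) / u) q n

variable {q : ℝ}

lemma tendsto_thetaQTrunc (hq : |q| < 1) (u : ℂ) :
    Filter.Tendsto (thetaQTrunc q u) Filter.atTop (nhds (thetaQ q u)) :=
  (tendsto_qpochC hq _).const_mul _

lemma qpochInf_mul_zpow_neg (hq0 : q ≠ 0) (hq : |q| < 1) {u : ℂ} (hu : u ≠ 0) (n : ℕ) :
    qpochInf (u * (q : ℂ) ^ (-(n : ℤ))) q =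
      (-u) ^ n / (q : ℂ) ^ (n + 1).choose 2 * thetaQTrunc q u n := by
  have hqn : (q : ℂ) ^ n ≠ 0 := pow_ne_zero n (Complex.ofReal_ne_zero.mpr hq0)
  rw [← qpochC_mul_qpochInf_mul_pow hq _ n, qpochC_mul_zpow_neg hq0 hu, zpow_neg, zpow_natCast,
    inv_mul_cancel_right₀ hqn, thetaQTrunc]
  ring

lemma thetaQ_ne_zero (hq0 : q ≠ 0) (hq : |q| < 1) {u : ℂ}
    (hu : ∀ k : ℤ, u * (q : ℂ) ^ k ≠ 1) : thetaQ q u ≠ 0 := by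
  have hqC : (q : ℂ) ≠ 0 := Complex.ofReal_ne_zero.mpr hq0
  refine mul_ne_zero (qpochInf_ne_zero hq fun m => by exact_mod_cast hu m)
    (qpochInf_ne_zero hq fun m hm => hu (-((m + 1 : ℕ) : ℤ)) ?_)
  have hu_eq : u = (q : ℂ) ^ (m + 1) := by
    rw [div_mul_eq_mul_div, ← pow_succ'] at hm
    exact (eq_of_div_eq_one hm).symm
  rw [hu_eq, zpow_neg, zpow_natCast, mul_inv_cancel₀ (pow_ne_zero _ hqC)]

end Theta

section Admissible

variable {q zm zp x : ℝ} {a b : ℂ}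

lemma mul_zpow_mem_Lambda (hq0 : q ≠ 0) (hx : x ∈ Lambda q zm zp) (k : ℤ) :
    x * q ^ k ∈ Lambda q zm zp := by
  rcases hx with ⟨m, rfl⟩ | ⟨m, rfl⟩
  · exact Or.inl ⟨m + k, by rw [zpow_add₀ hq0, mul_assoc]⟩
  · exact Or.inr ⟨m + k, by rw [zpow_add₀ hq0, mul_assoc]⟩

lemma mem_Lambda_of_eq_or_eq (hx : x = zm ∨ x = zp) : x ∈ Lambda q zm zp :=
  hx.imp (fun h => ⟨0, by rw [h, zpow_zero, mul_one]⟩)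
    fun h => ⟨0, by rw [h, zpow_zero, mul_one]⟩

namespace AdmissiblePair

protected lemma symm (h : AdmissiblePair q zm zp a b) : AdmissiblePair q zm zp b a := by
  obtain ⟨ha, hb, ⟨him, rfl⟩ | ⟨him_a, him_b, s, t, hs, ht, hst, hgap, ha_mem, hb_mem⟩⟩ := h
  · exact ⟨hb, ha, Or.inl ⟨by simpa using him, (Complex.conj_conj a).symm⟩⟩
  · exact ⟨hb, ha, Or.inr ⟨him_b, him_a, s, t, hs, ht, hst, hgap, hb_mem, ha_mem⟩⟩

lemma inv_ne_ofReal (h : AdmissiblePair q zm zp a b) (hx : x ∈ Lambda q zm zp) :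
    a⁻¹ ≠ x := by
  intro hax
  obtain ⟨-, -, ⟨him, -⟩ | ⟨-, -, s, t, -, -, -, hgap, ha_mem, -⟩⟩ := h
  · apply him
    rw [← inv_inv a, hax, ← Complex.ofReal_inv, Complex.ofReal_im]
  · rw [hax, Complex.ofReal_re] at ha_mem
    exact hgap x hx ha_mem

lemma thetaQ_mul_ne_zero (h : AdmissiblePair q zm zp a b) (hq0 : q ≠ 0) (hq : |q| < 1)
    (hx : x ∈ Lambda q zm zp) : thetaQ q (a * x) ≠ 0 := by
  refine thetaQ_ne_zero hq0 hq fun k hk =>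
    h.inv_ne_ofReal (mul_zpow_mem_Lambda hq0 hx k) ?_
  push_cast
  exact inv_eq_of_mul_eq_one_right (by rw [← mul_assoc, hk])

end AdmissiblePair

end Admissible

section Weight

variable {q ζ : ℝ} {a b c d : ℂ}

lemma pow_mul_weightC_mul_zpow_neg (hq0 : q ≠ 0) (hq : |q| < 1) (ha : a ≠ 0) (hb : b ≠ 0)
    (hc : c ≠ 0) (hd : d ≠ 0) (hζ : ζ ≠ 0) (n : ℕ) :
    (c * d * (|q| : ℝ) / (a * b)) ^ n * weightC q a b c d (ζ * q ^ (-(n : ℤ))) =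
      (|ζ| : ℝ) * thetaQTrunc q (a * ζ) n * thetaQTrunc q (b * ζ) n /
        (thetaQTrunc q (c * ζ) n * thetaQTrunc q (d * ζ) n) := by
  have hqC : (q : ℂ) ≠ 0 := Complex.ofReal_ne_zero.mpr hq0
  have hζC : (ζ : ℂ) ≠ 0 := Complex.ofReal_ne_zero.mpr hζ
  have hqpoch {p : ℂ} (hp : p ≠ 0) :
      qpochInf (p * ((ζ * q ^ (-(n : ℤ)) : ℝ) : ℂ)) q =
        (-(p * ζ)) ^ n / (q : ℂ) ^ (n + 1).choose 2 * thetaQTrunc q (p * ζ) n := by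
    rw [← qpochInf_mul_zpow_neg hq0 hq (mul_ne_zero hp hζC)]
    push_cast
    rw [mul_assoc]
  have habs : ((|ζ * q ^ (-(n : ℤ))| : ℝ) : ℂ) = (|ζ| : ℝ) / ((|q| : ℝ) : ℂ) ^ n := by
    rw [abs_mul, abs_zpow, zpow_neg, zpow_natCast, ← div_eq_mul_inv]
    push_cast
    rfl
  have growth_factors_cancel :
      (c * d * (|q| : ℝ) / (a * b)) ^ n / ((|q| : ℝ) : ℂ) ^ n *
        ((-(a * ζ)) ^ n / (q : ℂ) ^ (n + 1).choose 2 *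
            ((-(b * ζ)) ^ n / (q : ℂ) ^ (n + 1).choose 2) /
          ((-(c * ζ)) ^ n / (q : ℂ) ^ (n + 1).choose 2 *
            ((-(d * ζ)) ^ n / (q : ℂ) ^ (n + 1).choose 2))) = 1 := by
    have habsq : ((|q| : ℝ) : ℂ) ≠ 0 := Complex.ofReal_ne_zero.mpr (abs_ne_zero.mpr hq0)
    field_simp
    simp only [← mul_pow]
    congr 1
    field_simp
  rw [weightC, hqpoch ha, hqpoch hb, hqpoch hc, hqpoch hd, habs]
  linear_combination ((|ζ| : ℝ) * thetaQTrunc q (a * ζ) n * thetaQTrunc q (b * ζ) n /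
    (thetaQTrunc q (c * ζ) n * thetaQTrunc q (d * ζ) n)) * growth_factors_cancel

theorem weight_asymptotics_general (hq0 : q ≠ 0) (hq : |q| < 1) (ha : a ≠ 0) (hb : b ≠ 0)
    (hc : c ≠ 0) (hd : d ≠ 0) (hζ : ζ ≠ 0) (hcζ : thetaQ q (c * ζ) ≠ 0)
    (hdζ : thetaQ q (d * ζ) ≠ 0) :
    Filter.Tendsto
      (fun n : ℕ =>
        (c * d * (|q| : ℝ) / (a * b)) ^ n * weightC q a b c d (ζ * q ^ (-(n : ℤ))))
      Filter.atTop
      (nhds ((|ζ| : ℝ) * thetaQ q (a * ζ) * thetaQ q (b * ζ) /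
        (thetaQ q (c * ζ) * thetaQ q (d * ζ)))) := by
  simp only [pow_mul_weightC_mul_zpow_neg hq0 hq ha hb hc hd hζ]
  have lim (p : ℂ) := tendsto_thetaQTrunc hq (p * ζ)
  exact (((lim a).const_mul _).mul (lim b)).div ((lim c).mul (lim d)) (mul_ne_zero hcζ hdζ)

end Weight

/-- Weight asymptotics along the lattice: for admissible pairs (a,b) and (c,d) and
ζ ∈ {ζ₋, ζ₊}, (cdq/(ab))ⁿ w(ζq^{−n}; a,b,c,d) → |ζ| θ_q(aζ)θ_q(bζ)/(θ_q(cζ)θ_q(dζ)),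
so w(x;a,b,c,d) ~ const·(ab/(cdq))ⁿ along x = ζq^{−n}. -/
theorem weight_asymptotics (q zm zp : ℝ) (hq0 : 0 < q) (hq1 : q < 1) (hzm : zm < 0)
    (hzp : 0 < zp) (a b c d : ℂ)
    (hab : AdmissiblePair q zm zp a b) (hcd : AdmissiblePair q zm zp c d)
    (ζ : ℝ) (hζ : ζ = zm ∨ ζ = zp) :
    Filter.Tendsto
      (fun n : ℕ =>
        (c * d * (q : ℂ) / (a * b)) ^ n * weightC q a b c d (ζ * q ^ (-(n : ℤ))))
      Filter.atTop
      (nhds ((|ζ| : ℝ) * thetaQ q (a * ζ) * thetaQ q (b * ζ) /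
        (thetaQ q (c * ζ) * thetaQ q (d * ζ)))) := by
  have hq : |q| < 1 := by rwa [abs_of_pos hq0]
  have hζ0 : ζ ≠ 0 := by rcases hζ with rfl | rfl <;> [exact hzm.ne; exact hzp.ne']
  have hζΛ : ζ ∈ Lambda q zm zp := mem_Lambda_of_eq_or_eq hζ
  simpa only [abs_of_pos hq0] using
    weight_asymptotics_general hq0.ne' hq hab.1 hab.2.1 hcd.1 hcd.2.1 hζ0
      (hcd.thetaQ_mul_ne_zero hq0.ne' hq hζΛ) (hcd.symm.thetaQ_mul_ne_zero hq0.ne' hq hζΛ)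

end
end

section
/- For every N ≥ 1 and all signatures λ, ν ∈ ℤ^N (weakly decreasing integer vectors of length N), the following symmetry relation holds: S_{λ|N}(q^{ν₁+N−1}, q^{ν₂+N−2}, …, q^{ν_N}) / S_{λ|N}(q^{N−1}, q^{N−2}, …, 1) = S_{ν|N}(q^{λ₁+N−1}, q^{λ₂+N−2}, …, q^{λ_N}) / S_{ν|N}(q^{N−1}, q^{N−2}, …, 1). -/
open scoped BigOperators
open Classical

noncomputable section

/-- The Schur Laurent polynomial S_{λ|N}(u) = det[u_j^{λ_i+N−i}] / ∏_{i<j}(u_i−u_j). -/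
def schurL (N : ℕ) (l : Fin N → ℤ) (u : Fin N → ℝ) : ℝ :=
  (Matrix.of fun i j : Fin N => u j ^ (l i + (N : ℤ) - 1 - (i : ℕ))).det /
    ∏ p ∈ Finset.univ.filter (fun p : Fin N × Fin N => p.1 < p.2), (u p.1 - u p.2)

/-!
Write `a_α(u) = det [u_j ^ α_i]` and `ρ = (N - 1, …, 1, 0)`, so that `S_λ = a_{λ+ρ} / a_ρ`.
Evaluated at powers of `q`, the alternant `a_α(q^β) = det [q ^ (α_i β_j)]` is symmetric in `α`
and `β`. In particular `S_ν(q^ρ) = a_ρ(q^{ν+ρ}) / a_ρ(q^ρ)`, whose numerator is the denominator of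
`S_λ(q^{ν+ρ})`; hence `S_λ(q^{ν+ρ}) S_ν(q^ρ) = a_{λ+ρ}(q^{ν+ρ}) / a_ρ(q^ρ)`, which is symmetric in
`λ` and `ν`.
-/

section Alternant

variable {ι K : Type*} [Fintype ι] [DecidableEq ι] [Field K]

/-- The alternant `a_α(u) = det [u_j ^ α_i]` with integer exponents. -/
def alternant (a : ι → ℤ) (u : ι → K) : K :=
  (Matrix.of fun i j => u j ^ a i).det

lemma alternant_zpow_comm (q : K) (a b : ι → ℤ) :
    alternant a (fun i => q ^ b i) = alternant b (fun i => q ^ a i) := by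
  rw [alternant, alternant, ← Matrix.det_transpose]
  congr 1
  ext i j
  rw [Matrix.transpose_apply, Matrix.of_apply, Matrix.of_apply, ← zpow_mul, zpow_mul']

end Alternant

section SchurLaurent

variable {N : ℕ} {K : Type*} [Field K]

/-- The shifted exponents `λ + ρ` with `ρ = (N - 1, …, 1, 0)`; thus `ρ` itself is `addRho 0`.
The rows are indexed from `0`, so the paper's `λ_i + N - i` is `l i + N - 1 - i`. -/
def addRho (l : Fin N → ℤ) (i : Fin N) : ℤ :=
  l i + (N : ℤ) - 1 - (i : ℕ)

lemma addRho_injective {l : Fin N → ℤ} (hl : Antitone l) : Function.Injective (addRho l) := by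
  have hanti : StrictAnti (addRho l) := fun i j hij => by
    have hle : l j ≤ l i := hl hij.le
    unfold addRho
    omega
  exact hanti.injective

lemma alternant_addRho_zero (u : Fin N → K) :
    alternant (addRho 0) u = ∏ i, ∏ j ∈ Finset.Ioi i, (u i - u j) := by
  have hmatrix : (Matrix.of fun i j => u j ^ addRho 0 i) =
      (Matrix.projVandermonde 1 u).transpose := by
    ext i j
    have hexp : addRho 0 i = ((i.rev : ℕ) : ℤ) := by
      rw [addRho, Pi.zero_apply, Fin.val_rev]
      omega
    rw [Matrix.of_apply, Matrix.transpose_apply, Matrix.projVandermonde_apply, hexp,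
      zpow_natCast, Pi.one_apply, one_pow, one_mul]
  rw [alternant, hmatrix, Matrix.det_transpose, Matrix.det_projVandermonde]
  simp only [Pi.one_apply, one_mul]

lemma alternant_addRho_zero_ne_zero {u : Fin N → K} (hu : Function.Injective u) :
    alternant (addRho 0) u ≠ 0 := by
  rw [alternant_addRho_zero]
  refine Finset.prod_ne_zero_iff.2 fun i _ => Finset.prod_ne_zero_iff.2 fun j hj => ?_
  exact sub_ne_zero.2 (hu.ne (Finset.mem_Ioi.1 hj).ne)

/-- The Schur Laurent polynomial `S_λ(u) = a_{λ+ρ}(u) / a_ρ(u)` over an arbitrary field, with the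
Vandermonde product written as the alternant `a_ρ`. It takes the junk value `0` when the `u_i` are
not pairwise distinct. -/
def schurLaurent (l : Fin N → ℤ) (u : Fin N → K) : K :=
  alternant (addRho l) u / alternant (addRho 0) u

lemma schurL_eq_schurLaurent (l : Fin N → ℤ) (u : Fin N → ℝ) :
    schurL N l u = schurLaurent l u := by
  rw [schurLaurent, alternant_addRho_zero, Finset.prod_sigma']
  unfold schurL
  congr 1
  exact Finset.prod_bij' (fun p _ => ⟨p.1, p.2⟩) (fun p _ => (p.1, p.2))
    (by simp) (by simp) (by simp) (by simp) (by simp)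

lemma schurLaurent_principal_ne_zero {q : K} (hq : Function.Injective fun n : ℤ => q ^ n)
    {l : Fin N → ℤ} (hl : Function.Injective (addRho l)) :
    schurLaurent l (fun i => q ^ addRho 0 i) ≠ 0 := by
  rw [schurLaurent, alternant_zpow_comm q (addRho l)]
  exact div_ne_zero (alternant_addRho_zero_ne_zero (hq.comp hl))
    (alternant_addRho_zero_ne_zero (hq.comp (addRho_injective antitone_const)))

lemma schurLaurent_mul_principal {q : K} (l : Fin N → ℤ) {ν : Fin N → ℤ}
    (hν : Function.Injective fun i => q ^ addRho ν i) :
    schurLaurent l (fun i => q ^ addRho ν i) * schurLaurent ν (fun i => q ^ addRho 0 i) =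
      alternant (addRho l) (fun i => q ^ addRho ν i) /
        alternant (addRho 0) (fun i : Fin N => q ^ addRho 0 i) := by
  rw [schurLaurent, schurLaurent, alternant_zpow_comm q (addRho ν)]
  exact div_mul_div_cancel₀ (alternant_addRho_zero_ne_zero hν)

theorem schur_symmetry_general {q : K} (hq : Function.Injective fun n : ℤ => q ^ n)
    {l ν : Fin N → ℤ} (hl : Function.Injective (addRho l)) (hν : Function.Injective (addRho ν)) :
    schurLaurent l (fun i => q ^ addRho ν i) / schurLaurent l (fun i => q ^ addRho 0 i) =
      schurLaurent ν (fun i => q ^ addRho l i) / schurLaurent ν (fun i => q ^ addRho 0 i) := by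
  rw [div_eq_div_iff (schurLaurent_principal_ne_zero hq hl) (schurLaurent_principal_ne_zero hq hν),
    schurLaurent_mul_principal l (hq.comp hν), schurLaurent_mul_principal ν (hq.comp hl),
    alternant_zpow_comm]

end SchurLaurent

/-- Symmetry relation for Schur polynomials: for signatures λ, ν ∈ ℤ^N,
S_{λ|N}(q^{ν+ε_N})/S_{λ|N}(q^{ε_N}) = S_{ν|N}(q^{λ+ε_N})/S_{ν|N}(q^{ε_N}),
where ε_N = (N−1, N−2, …, 0). -/
theorem schur_symmetry (q : ℝ) (hq0 : 0 < q) (hq1 : q < 1) (N : ℕ) (hN : 1 ≤ N)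
    (l ν : Fin N → ℤ) (hl : Antitone l) (hν : Antitone ν) :
    schurL N l (fun i => q ^ (ν i + (N : ℤ) - 1 - (i : ℕ))) /
        schurL N l (fun i => q ^ ((N : ℤ) - 1 - (i : ℕ)))
      = schurL N ν (fun i => q ^ (l i + (N : ℤ) - 1 - (i : ℕ))) /
          schurL N ν (fun i => q ^ ((N : ℤ) - 1 - (i : ℕ))) := by
  simpa only [schurL_eq_schurLaurent, addRho, Pi.zero_apply, zero_add] using
    schur_symmetry_general (zpow_right_injective₀ hq0 hq1.ne) (addRho_injective hl)
      (addRho_injective hν)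

end
end
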